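/- arXiv:1309.2065 — 3 statements merged into one kernel-verified Lean document; each statement's English description precedes it below -/
import Mathlib

section
/- Let p be an odd prime, m ≥ 1, B ∈ S_m(ℤ_p)^×, r a nonnegative integer, and d ∈ ℤ_p^* a unit. Then α_p(p^r d B) = p^{r m(m+1)/2} α_p(B). -/
/-!
Since `p` is odd, `2` is a unit and the condition defining the count modulo `p^a` is just the
congruence `Xᵀ B X ≡ B mod p^a`. For `p^r d B` modulo `p^(a+r)` the factor `p^r d` cancels, leaving
the congruence for `B` modulo `p^a` with `X` taken modulo `p^(a+r)`; hence
`#A_(a+r)(p^r d B) = p^(r m²) #A_a(B)` (`Acount_scale`), and the normalizing factors turn `r m²`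
into `r m(m+1)/2`.

As the density is a `limUnder`, this identity of sequences yields the claim only once the sequence
for `B` is known to converge. In fact it is eventually constant (`normCount_succ`). Let `a` exceed
the valuation of `det B`. If `T` is symmetric and `T ≡ B mod p^a`, then one Newton step
`U = 1 + B⁻¹(T - B)/2` gives a `U` invertible modulo `p^(a+1)` with `Uᵀ B U ≡ T mod p^(a+1)`
(`exists_isUnit_transform`). So `X ↦ X U` identifies the solutions of `Xᵀ B X = B` modulo `p^(a+1)`
with those of `Xᵀ B X = T`. There are `p^(m(m+1)/2)` such `T` modulo `p^(a+1)`, and comparing with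
the `p^(m²)` lifts of each solution modulo `p^a` gives
`p^(m²) #A_a(B) = p^(m(m+1)/2) #A_(a+1)(B)` (`Acount_succ`).
-/

open Matrix Filter

open scoped Classical

noncomputable section

namespace KM

variable (p : ℕ) [Fact p.Prime]

/-- Entrywise coercion of a `ℤ_[p]`-matrix into `ℚ_[p]`. -/
def q {n m : Type*} (A : Matrix n m ℤ_[p]) : Matrix n m ℚ_[p] :=
  A.map (fun x : ℤ_[p] => (x : ℚ_[p]))

/-- `ℤ_p`-equivalence of symmetric matrices with entries in `ℤ_p`. -/
def IntEquiv {n : Type*} [Fintype n] [DecidableEq n]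
    (A B : Matrix n n ℤ_[p]) : Prop :=
  ∃ U : Matrix n n ℤ_[p], IsUnit U.det ∧ B = Uᵀ * A * U

/-- `ℤ_p`-equivalence of `ℤ_p`-matrices up to reindexing (for index types of
the same cardinality). -/
def IntEquivR {n n' : Type*} [Fintype n] [DecidableEq n] [Fintype n'] [DecidableEq n']
    (A : Matrix n n ℤ_[p]) (B : Matrix n' n' ℤ_[p]) : Prop :=
  ∃ e : n ≃ n', IntEquiv p A (B.submatrix e e)

/-- `ℤ_p`-equivalence of symmetric matrices with entries in `ℚ_p`. -/
def RatEquiv {n : Type*} [Fintype n] [DecidableEq n]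
    (A B : Matrix n n ℚ_[p]) : Prop :=
  ∃ U : Matrix n n ℤ_[p], IsUnit U.det ∧ B = (q p U)ᵀ * A * (q p U)

/-- `ℤ_p`-equivalence of `ℚ_p`-matrices up to reindexing. -/
def RatEquivR {n n' : Type*} [Fintype n] [DecidableEq n] [Fintype n'] [DecidableEq n']
    (A : Matrix n n ℚ_[p]) (B : Matrix n' n' ℚ_[p]) : Prop :=
  ∃ e : n ≃ n', RatEquiv p A (B.submatrix e e)

/-- A matrix over `ℚ_p` is half-integral: symmetric, diagonal entries in `ℤ_p`,
off-diagonal entries in `(1/2)ℤ_p`. -/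
def IsHalfIntegral {n : Type*} [DecidableEq n] (A : Matrix n n ℚ_[p]) : Prop :=
  A.IsSymm ∧ ∀ i j, ∃ x : ℤ_[p], A i j = (if i = j then 1 else 2⁻¹) * (x : ℚ_[p])

/-- `A ∈ 4·L_{m,p}`. -/
def InFourL {n : Type*} [DecidableEq n] (A : Matrix n n ℚ_[p]) : Prop :=
  IsHalfIntegral p ((4 : ℚ_[p])⁻¹ • A)

/-- The rank-one matrix `rᵀ r` viewed over `ℚ_p`. -/
def outer {n : Type*} (r : n → ℤ_[p]) : Matrix n n ℚ_[p] :=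
  Matrix.of fun i j => ((r i : ℚ_[p]) * (r j : ℚ_[p]))

/-- The matrix `A^{(1)} = [[1, r/2], [rᵀ/2, (A + rᵀr)/4]]`. -/
def Aone {n : Type*} [Fintype n] [DecidableEq n]
    (A : Matrix n n ℚ_[p]) (r : n → ℤ_[p]) :
    Matrix (Fin 1 ⊕ n) (Fin 1 ⊕ n) ℚ_[p] :=
  Matrix.fromBlocks 1 (Matrix.of fun _ j => (r j : ℚ_[p]) / 2)
    (Matrix.of fun i _ => (r i : ℚ_[p]) / 2)
    ((4 : ℚ_[p])⁻¹ • (A + outer p r))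

/-- A `ℚ_p`-matrix has all entries in `ℤ_p`. -/
def IsIntegral {n m : Type*} (A : Matrix n m ℚ_[p]) : Prop :=
  ∀ i j, ∃ x : ℤ_[p], A i j = (x : ℚ_[p])

/-- Membership in `L^{(0)}`: nondegenerate, symmetric, integral, even diagonal. -/
def InL0 {n : Type*} [Fintype n] [DecidableEq n] (A : Matrix n n ℚ_[p]) : Prop :=
  A.IsSymm ∧ A.det ≠ 0 ∧ ∀ i j, ∃ x : ℤ_[p], A i j = (if i = j then 2 else 1) * (x : ℚ_[p])

/-- Membership in `L'_{m,p}`. -/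
def InLprime {n : Type*} [Fintype n] [DecidableEq n] (A : Matrix n n ℚ_[p]) : Prop :=
  IsHalfIntegral p A ∧ ∃ r : n → ℤ_[p], InFourL p (A + outer p r)

/-- Membership in `L^{(1)}`: nondegenerate element of `L'`. -/
def InL1 {n : Type*} [Fintype n] [DecidableEq n] (A : Matrix n n ℚ_[p]) : Prop :=
  InLprime p A ∧ A.det ≠ 0

/-- `B[W⁻¹] = (W⁻¹)ᵀ B W⁻¹`. -/
def conjInv {n : Type*} [Fintype n] [DecidableEq n]
    (B : Matrix n n ℚ_[p]) (W : Matrix n n ℤ_[p]) : Matrix n n ℚ_[p] :=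
  ((q p W)⁻¹)ᵀ * B * (q p W)⁻¹

/-- `Ω̃(C)` for `C` an integral symmetric matrix. -/
def OmS {n : Type*} [Fintype n] [DecidableEq n] (C : Matrix n n ℤ_[p]) :
    Set (Matrix n n ℤ_[p]) :=
  {W | W.det ≠ 0 ∧ (conjInv p (q p C) W).IsSymm ∧ IsIntegral p (conjInv p (q p C) W)}

/-- `Ω̃^{(0)}(B)`. -/
def OmT0 {n : Type*} [Fintype n] [DecidableEq n] (B : Matrix n n ℚ_[p]) :
    Set (Matrix n n ℤ_[p]) :=
  {W | W.det ≠ 0 ∧ InL0 p (conjInv p B W)}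

/-- `Ω̃^{(1)}(B)`. -/
def OmT1 {n : Type*} [Fintype n] [DecidableEq n] (B : Matrix n n ℚ_[p]) :
    Set (Matrix n n ℤ_[p]) :=
  {W | W.det ≠ 0 ∧ InL1 p (conjInv p B W)}

/-- `Ω̃^{(j)}(B)` for `j ∈ {0,1}`. -/
def OmTJ {n : Type*} [Fintype n] [DecidableEq n] (j : ℕ) (B : Matrix n n ℚ_[p]) :
    Set (Matrix n n ℤ_[p]) :=
  {W | W.det ≠ 0 ∧ if j = 0 then InL0 p (conjInv p B W) else InL1 p (conjInv p B W)}

/-- The double coset `D_{m,i} = GL·diag(1_{m-i}, p·1_i)·GL`. -/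
def Dset {n : Type*} [Fintype n] [DecidableEq n] (i : ℕ) : Set (Matrix n n ℤ_[p]) :=
  {W | ∃ s : Finset n, s.card = i ∧
    ∃ U V : Matrix n n ℤ_[p], IsUnit U.det ∧ IsUnit V.det ∧
      W = U * Matrix.diagonal (fun j => if j ∈ s then (p : ℤ_[p]) else 1) * V}

/-- `W` and `W'` lie in the same left `GL_m(ℤ_p)`-coset. -/
def SameLeft {n : Type*} [Fintype n] [DecidableEq n] (W W' : Matrix n n ℤ_[p]) : Prop :=
  ∃ U : Matrix n n ℤ_[p], IsUnit U.det ∧ W' = U * W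

/-- `W` and `W'` lie in the same right `GL_m(ℤ_p)`-coset. -/
def SameRight {n : Type*} [Fintype n] [DecidableEq n] (W W' : Matrix n n ℤ_[p]) : Prop :=
  ∃ U : Matrix n n ℤ_[p], IsUnit U.det ∧ W' = W * U

/-- `φ` induces a bijection between the sets of left `GL(ℤ_p)`-cosets of `Ω` and `Ω'`. -/
def InducesLeftBij {n n' : Type*} [Fintype n] [DecidableEq n] [Fintype n'] [DecidableEq n']
    (φ : Matrix n n ℤ_[p] → Matrix n' n' ℤ_[p])
    (Ω : Set (Matrix n n ℤ_[p])) (Ω' : Set (Matrix n' n' ℤ_[p])) : Prop :=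
  (∀ W ∈ Ω, φ W ∈ Ω') ∧
  (∀ W₁ ∈ Ω, ∀ W₂ ∈ Ω, (SameLeft p W₁ W₂ ↔ SameLeft p (φ W₁) (φ W₂))) ∧
  (∀ V ∈ Ω', ∃ W ∈ Ω, SameLeft p (φ W) V)

/-- `A[Y] ≡ B mod p^a S_e`. -/
def densCond {n n' : Type*} [Fintype n] [Fintype n'] [DecidableEq n']
    (A : Matrix n n ℤ_[p]) (B : Matrix n' n' ℤ_[p]) (a : ℕ)
    (Y : Matrix n n' ℤ_[p]) : Prop :=
  ∀ i j, ((p : ℤ_[p]) ^ a * (if i = j then 2 else 1)) ∣ (Yᵀ * A * Y - B) i j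

/-- `#A_a(A,B)`: the number of solutions mod `p^a`. -/
def Acount {n n' : Type*} [Fintype n] [Fintype n'] [DecidableEq n']
    (A : Matrix n n ℤ_[p]) (B : Matrix n' n' ℤ_[p]) (a : ℕ) : ℕ :=
  Nat.card {X : Matrix n n' (ZMod (p ^ a)) //
    ∃ Y : Matrix n n' ℤ_[p], Y.map (PadicInt.toZModPow a) = X ∧ densCond p A B a Y}

/-- The local density `α_p(A,B)`. -/
def locDensPair {n n' : Type*} [Fintype n] [Fintype n'] [DecidableEq n']
    (A : Matrix n n ℤ_[p]) (B : Matrix n' n' ℤ_[p]) : ℝ :=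
  limUnder atTop (fun a : ℕ =>
    (2 : ℝ) ^ (-(if Fintype.card n = Fintype.card n' then (1 : ℤ) else 0)) *
    (p : ℝ) ^ ((a : ℤ) * (-((Fintype.card n : ℤ) * (Fintype.card n' : ℤ)) +
      ((Fintype.card n' : ℤ) * ((Fintype.card n' : ℤ) + 1)) / 2)) *
    (Acount p A B a : ℝ))

/-- The local density `α_p(A) = α_p(A,A)`. -/
def locDens {n : Type*} [Fintype n] [DecidableEq n] (A : Matrix n n ℤ_[p]) : ℝ :=
  locDensPair p A A

/-- `χ_p` on units, for `p` odd. -/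
def chiOdd (u : ℤ_[p]) : ℤ :=
  if IsSquare (u : ℚ_[p]) then 1 else if IsUnit u then -1 else 0

/-- `χ_2` on units. -/
def chi2 (u : ℤ_[2]) : ℤ :=
  if IsSquare (u : ℚ_[2]) then 1
  else if IsSquare (((5 * u : ℤ_[2]) : ℚ_[2])) then -1 else 0

/-- The set of `GL(ℤ_p)`-equivalence classes of elements of `S`. -/
def classesOf {n : Type*} [Fintype n] [DecidableEq n]
    (S : Set (Matrix n n ℤ_[p])) : Set (Set (Matrix n n ℤ_[p])) :=
  (fun A => {A' | IntEquiv p A A'}) '' S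

end KM

namespace KMaux

/-! ### Counting fibres of a surjective homomorphism -/

lemma card_comp_eq_mul_card_ker {G H : Type*} [AddCommGroup G] [AddCommGroup H]
    (f : G →+ H) (hf : Function.Surjective f) (P : H → Prop) :
    Nat.card {x // P (f x)} = Nat.card {y // P y} * Nat.card f.ker := by
  rw [← Nat.card_prod]
  have hs : ∀ y, f (Function.surjInv hf y) = y := Function.surjInv_eq hf
  have hk : ∀ k : f.ker, f (k : G) = 0 := fun k => k.2
  refine Nat.card_congr
    { toFun := fun x => (⟨f x.1, x.2⟩, ⟨x.1 - Function.surjInv hf (f x.1), ?_⟩)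
      invFun := fun z => ⟨Function.surjInv hf z.1.1 + z.2.1, ?_⟩
      left_inv := ?_
      right_inv := ?_ }
  · simp [AddMonoidHom.mem_ker, hs]
  · simpa [hs, hk] using z.1.2
  · intro x
    simp
  · rintro ⟨⟨y, hy⟩, k⟩
    simp [hs, hk]

lemma card_comp_mul_card {G H : Type*} [AddCommGroup G] [AddCommGroup H]
    (f : G →+ H) (hf : Function.Surjective f) (P : H → Prop) :
    Nat.card {x // P (f x)} * Nat.card H = Nat.card G * Nat.card {y // P y} := by
  have h1 := card_comp_eq_mul_card_ker f hf P
  have h2 := card_comp_eq_mul_card_ker f hf (fun _ => True)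
  rw [Nat.card_congr (Equiv.subtypeUnivEquiv (fun _ => trivial)),
    Nat.card_congr (Equiv.subtypeUnivEquiv (fun _ => trivial))] at h2
  rw [h1, h2]
  ring

/-! ### Reduction modulo powers of `p` -/

section Reduction

variable (p : ℕ) [Fact p.Prime]

/-- The reduction map `ℤ/p^b → ℤ/p^a` for `a ≤ b`. -/
def red {a b : ℕ} (h : a ≤ b) : ZMod (p ^ b) →+* ZMod (p ^ a) :=
  ZMod.castHom (pow_dvd_pow p h) (ZMod (p ^ a))

lemma red_toZModPow {a b : ℕ} (h : a ≤ b) (x : ℤ_[p]) :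
    red p h (PadicInt.toZModPow b x) = PadicInt.toZModPow a x :=
  RingHom.congr_fun (PadicInt.zmod_cast_comp_toZModPow a b h) x

lemma toZModPow_eq_zero_iff (a : ℕ) (x : ℤ_[p]) :
    PadicInt.toZModPow a x = 0 ↔ (p : ℤ_[p]) ^ a ∣ x := by
  rw [← RingHom.mem_ker, PadicInt.ker_toZModPow, Ideal.mem_span_singleton]

lemma toZModPow_surjective (a : ℕ) :
    Function.Surjective (PadicInt.toZModPow a : ℤ_[p] →+* ZMod (p ^ a)) :=
  ZMod.ringHom_surjective _

lemma card_comp_red {ι : Type*} [Finite ι] {a b : ℕ} (h : a ≤ b)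
    (P : (ι → ZMod (p ^ a)) → Prop) :
    Nat.card {x : ι → ZMod (p ^ b) // P (fun i => red p h (x i))} =
      p ^ ((b - a) * Nat.card ι) * Nat.card {y // P y} := by
  have hp0 : 0 < p := (Fact.out : p.Prime).pos
  have key := card_comp_mul_card (G := ι → ZMod (p ^ b)) (H := ι → ZMod (p ^ a))
    ((red p h).toAddMonoidHom.compLeft ι)
    (fun y => by
      choose x hx using fun i => ZMod.ringHom_surjective (red p h) (y i)
      exact ⟨x, funext hx⟩) P
  simp only [Nat.card_fun, Nat.card_zmod] at key
  have hb : (p ^ b) ^ Nat.card ι =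
      p ^ ((b - a) * Nat.card ι) * (p ^ a) ^ Nat.card ι := by
    rw [← pow_mul, ← pow_mul, ← pow_add, ← add_mul, Nat.sub_add_cancel h]
  rw [hb] at key
  have hpos : 0 < (p ^ a) ^ Nat.card ι := by positivity
  refine Nat.eq_of_mul_eq_mul_right hpos ?_
  refine Eq.trans ?_ (key.trans ?_)
  · rfl
  · ring

lemma card_matrix_comp_red {n : Type*} [Fintype n] {a b : ℕ} (h : a ≤ b)
    (P : Matrix n n (ZMod (p ^ a)) → Prop) :
    Nat.card {X : Matrix n n (ZMod (p ^ b)) // P (X.map (red p h))} =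
      p ^ ((b - a) * (Fintype.card n * Fintype.card n)) * Nat.card {Y // P Y} := by
  have key := card_comp_red p (ι := n × n) h (fun x => P (Matrix.of fun i j => x (i, j)))
  rw [Nat.card_prod, Nat.card_eq_fintype_card (α := n)] at key
  have e : ∀ R : Type, ∀ Q : Matrix n n R → Prop,
      Nat.card {x : n × n → R // Q (Matrix.of fun i j => x (i, j))} = Nat.card {X // Q X} := by
    intro R Q
    exact Nat.card_congr ((Equiv.curry n n R).subtypeEquiv (fun x => Iff.rfl))
  rw [e _ P] at key
  rw [← key]
  exact (e _ (fun X => P (X.map (red p h)))).symm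

end Reduction

/-! ### The counting function over `ℤ/p^a` -/

section Count

variable (p : ℕ) [Fact p.Prime] {n : Type*}

/-- The reduction of a `ℤ_p`-matrix modulo `p^a`. -/
def rmat (a : ℕ) (A : Matrix n n ℤ_[p]) : Matrix n n (ZMod (p ^ a)) :=
  A.map (PadicInt.toZModPow a)

lemma rmat_mul [Fintype n] (a : ℕ) (A C : Matrix n n ℤ_[p]) :
    rmat p a (A * C) = rmat p a A * rmat p a C := Matrix.map_mul

lemma rmat_transpose (a : ℕ) (A : Matrix n n ℤ_[p]) :
    rmat p a Aᵀ = (rmat p a A)ᵀ := rfl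

lemma rmat_red {a b : ℕ} (h : a ≤ b) (A : Matrix n n ℤ_[p]) :
    (rmat p b A).map (red p h) = rmat p a A := by
  ext i j
  simp [rmat, red_toZModPow]

lemma rmat_surjective (a : ℕ) (X : Matrix n n (ZMod (p ^ a))) :
    ∃ Y : Matrix n n ℤ_[p], rmat p a Y = X := by
  choose Y hY using fun i j => toZModPow_surjective p a (X i j)
  exact ⟨Matrix.of Y, by ext i j; exact hY i j⟩

lemma rmat_eq_iff (a : ℕ) (A C : Matrix n n ℤ_[p]) :
    rmat p a A = rmat p a C ↔ ∀ i j, (p : ℤ_[p]) ^ a ∣ (A - C) i j := by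
  simp only [← Matrix.ext_iff, ← toZModPow_eq_zero_iff, rmat, Matrix.map_apply,
    Matrix.sub_apply, map_sub, sub_eq_zero]

lemma isUnit_two (hp : p ≠ 2) : IsUnit (2 : ℤ_[p]) := by
  have h : ‖((2 : ℤ) : ℤ_[p])‖ = 1 := by
    refine le_antisymm (PadicInt.norm_le_one _) (not_lt.mp ?_)
    rw [PadicInt.norm_int_lt_one_iff_dvd]
    intro h
    have h2 : p ∣ 2 := by exact_mod_cast h
    exact hp ((Nat.prime_dvd_prime_iff_eq Fact.out Nat.prime_two).mp h2)
  have := PadicInt.isUnit_iff.mpr h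
  simpa using this

variable [Fintype n] [DecidableEq n]

/-- For odd `p` the evenness condition on the diagonal is vacuous. -/
lemma densCond_iff (hp : p ≠ 2) (A C Y : Matrix n n ℤ_[p]) (a : ℕ) :
    KM.densCond p A C a Y ↔ rmat p a (Yᵀ * A * Y) = rmat p a C := by
  rw [rmat_eq_iff]
  refine forall_congr' fun i => forall_congr' fun j => ?_
  refine IsUnit.mul_right_dvd ?_
  split_ifs
  · exact isUnit_two p hp
  · exact isUnit_one

lemma Acount_eq (hp : p ≠ 2) (A C : Matrix n n ℤ_[p]) (a : ℕ) :
    KM.Acount p A C a =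
      Nat.card {X : Matrix n n (ZMod (p ^ a)) // Xᵀ * rmat p a A * X = rmat p a C} := by
  refine Nat.card_congr (Equiv.subtypeEquivRight fun X => ?_)
  constructor
  · rintro ⟨Y, rfl, hY⟩
    rw [densCond_iff p hp, rmat_mul, rmat_mul, rmat_transpose] at hY
    exact hY
  · intro hX
    obtain ⟨Y, rfl⟩ := rmat_surjective p a X
    refine ⟨Y, rfl, ?_⟩
    rwa [densCond_iff p hp, rmat_mul, rmat_mul, rmat_transpose]

/-- Dividing the congruence `X[p^r d B] ≡ p^r d B mod p^(a+r)` by `p^r d` leaves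
`X[B] ≡ B mod p^a`, with `X` still taken modulo `p^(a+r)`. -/
lemma Acount_scale (hp : p ≠ 2) (B : Matrix n n ℤ_[p]) (r : ℕ) (d : ℤ_[p]) (hd : IsUnit d)
    (a : ℕ) :
    KM.Acount p (((p : ℤ_[p]) ^ r * d) • B) (((p : ℤ_[p]) ^ r * d) • B) (a + r) =
      p ^ (r * (Fintype.card n * Fintype.card n)) * KM.Acount p B B a := by
  have hp0 : (p : ℤ_[p]) ≠ 0 := PadicInt.prime_p.ne_zero
  have key := card_matrix_comp_red p (Nat.le_add_right a r)
    (fun X => Xᵀ * rmat p a B * X = rmat p a B)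
  rw [Nat.add_sub_cancel_left] at key
  rw [Acount_eq p hp, Acount_eq p hp, ← key]
  refine Nat.card_congr (Equiv.subtypeEquivRight fun X => ?_)
  obtain ⟨Y, rfl⟩ := rmat_surjective p (a + r) X
  rw [rmat_red, ← rmat_transpose, ← rmat_transpose, ← rmat_mul, ← rmat_mul, ← rmat_mul,
    ← rmat_mul, rmat_eq_iff, rmat_eq_iff]
  refine forall_congr' fun i => forall_congr' fun j => ?_
  have e : (Yᵀ * ((p : ℤ_[p]) ^ r * d) • B * Y - ((p : ℤ_[p]) ^ r * d) • B) i j =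
      (p : ℤ_[p]) ^ r * (d * (Yᵀ * B * Y - B) i j) := by
    rw [Matrix.mul_smul, Matrix.smul_mul, ← smul_sub, Matrix.smul_apply, smul_eq_mul, mul_assoc]
  rw [e, add_comm a r, pow_add, mul_dvd_mul_iff_left (pow_ne_zero _ hp0), hd.dvd_mul_left]

end Count

/-! ### Stabilization of the normalized count -/

section Stable

variable {n : Type*}

/-- The symmetric matrix with entries prescribed on unordered pairs of indices. -/
def symMat {R : Type*} (t : Sym2 n → R) : Matrix n n R := Matrix.of fun i j => t s(i, j)

lemma symMat_isSymm {R : Type*} (t : Sym2 n → R) : (symMat t).IsSymm := by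
  ext i j
  simp [symMat, Sym2.eq_swap]

lemma symMat_injective {R : Type*} : Function.Injective (symMat : (Sym2 n → R) → Matrix n n R) := by
  intro t t' h
  funext z
  induction z with
  | _ i j => exact congrFun (congrFun h i) j

lemma exists_symMat_eq {R : Type*} {A : Matrix n n R} (hA : A.IsSymm) : ∃ t, symMat t = A := by
  refine ⟨Sym2.lift ⟨fun i j => A i j, fun i j => (hA.apply i j).symm⟩, ?_⟩
  ext i j
  simp [symMat]

variable (p : ℕ) [Fact p.Prime] [Fintype n] [DecidableEq n]

/-- One Newton step for the equation `U[B] = T`: if `T ≡ B mod p^a` with `a` larger than the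
valuation of `det B`, then `U = 1 + B⁻¹(T - B)/2` is integral, congruent to `1` modulo `p`, and
solves the equation modulo `p^(a+1)`. -/
lemma exists_isUnit_transform (hp : p ≠ 2) (B T : Matrix n n ℤ_[p]) (hB : B.IsSymm)
    (hT : T.IsSymm) (hBd : B.det ≠ 0) (a : ℕ) (ha : B.det.valuation + 1 ≤ a)
    (h : rmat p a T = rmat p a B) :
    ∃ U : Matrix n n (ZMod (p ^ (a + 1))), IsUnit U ∧
      Uᵀ * rmat p (a + 1) B * U = rmat p (a + 1) T := by
  have hp0 : (p : ℤ_[p]) ≠ 0 := PadicInt.prime_p.ne_zero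
  obtain ⟨w, hw⟩ := (isUnit_two p hp).exists_right_inv
  rw [rmat_eq_iff] at h
  choose S hS using h
  let S' : Matrix n n ℤ_[p] := Matrix.of S
  have hTB : T - B = (p : ℤ_[p]) ^ a • S' := by
    ext i j
    simp [S', ← hS]
  have hS' : S'ᵀ = S' := by
    have h1 : (p : ℤ_[p]) ^ a • S'ᵀ = (p : ℤ_[p]) ^ a • S' := by
      rw [← Matrix.transpose_smul, ← hTB, Matrix.transpose_sub, hT.eq, hB.eq]
    exact smul_right_injective _ (pow_ne_zero a hp0) h1
  obtain ⟨c, hc⟩ : ∃ c : ℤ_[p], c * B.det = (p : ℤ_[p]) ^ B.det.valuation := by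
    refine ⟨((PadicInt.unitCoeff hBd)⁻¹ : ℤ_[p]ˣ), ?_⟩
    rw [Units.inv_mul_eq_iff_eq_mul]
    exact PadicInt.unitCoeff_spec hBd
  obtain ⟨k, rfl⟩ := Nat.exists_eq_add_of_le ha
  set v := B.det.valuation with hv
  -- `p • E` is `B⁻¹(T - B)/2`.
  let E : Matrix n n ℤ_[p] := ((p : ℤ_[p]) ^ k * w * c) • (B.adjugate * S')
  have hBE : B * ((p : ℤ_[p]) • E) = ((p : ℤ_[p]) ^ (v + 1 + k) * w) • S' := by
    simp only [E, Matrix.mul_smul, ← mul_assoc, Matrix.mul_adjugate, Matrix.smul_mul,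
      Matrix.one_mul, smul_smul]
    congr 1
    rw [pow_add, pow_add, ← hc]
    ring
  have hEB : ((p : ℤ_[p]) • E)ᵀ * B = ((p : ℤ_[p]) ^ (v + 1 + k) * w) • S' := by
    have := congrArg Matrix.transpose hBE
    rwa [Matrix.transpose_mul, hB.eq, Matrix.transpose_smul (_ * w), hS'] at this
  refine ⟨rmat p (v + 1 + k + 1) (1 + (p : ℤ_[p]) • E), ?_, ?_⟩
  · have e : rmat p (v + 1 + k + 1) (1 + (p : ℤ_[p]) • E) =
        1 + rmat p (v + 1 + k + 1) ((p : ℤ_[p]) • E) := by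
      ext i j
      simp [rmat, Matrix.one_apply, apply_ite]
    rw [e]
    refine IsNilpotent.isUnit_one_add ⟨v + 1 + k + 1, ?_⟩
    have e2 : rmat p (v + 1 + k + 1) ((p : ℤ_[p]) • E) =
        (p : ZMod (p ^ (v + 1 + k + 1))) • rmat p (v + 1 + k + 1) E := by
      ext i j
      simp [rmat]
    rw [e2, smul_pow, ← Nat.cast_pow, ZMod.natCast_self, zero_smul]
  · rw [← rmat_transpose, ← rmat_mul, ← rmat_mul, rmat_eq_iff]
    have e : (1 + (p : ℤ_[p]) • E)ᵀ * B * (1 + (p : ℤ_[p]) • E) - T =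
        ((p : ℤ_[p]) ^ (v + 1 + k + 1)) • (w • (S' * E)) := by
      have hT' : T = B + (p : ℤ_[p]) ^ (v + 1 + k) • S' := by rw [← hTB]; abel
      rw [Matrix.transpose_add, Matrix.transpose_one, add_mul, one_mul, hEB, mul_add, mul_one,
        add_mul, hBE, hT']
      have hww : ((p : ℤ_[p]) ^ (v + 1 + k)) • S' =
          ((p : ℤ_[p]) ^ (v + 1 + k) * w) • S' + ((p : ℤ_[p]) ^ (v + 1 + k) * w) • S' := by
        rw [← add_smul]
        congr 1
        linear_combination -((p : ℤ_[p]) ^ (v + 1 + k)) * hw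
      have hlast : ((p : ℤ_[p]) ^ (v + 1 + k) * w) • S' * (p : ℤ_[p]) • E =
          ((p : ℤ_[p]) ^ (v + 1 + k + 1)) • (w • (S' * E)) := by
        rw [Matrix.smul_mul, Matrix.mul_smul, smul_smul, smul_smul]
        congr 1
        ring
      rw [hww, hlast]
      abel
    intro i j
    rw [e, Matrix.smul_apply, smul_eq_mul]
    exact dvd_mul_right _ _

/-- The fibres of `X ↦ X[B]` modulo `p^(a+1)` over all symmetric `T ≡ B mod p^a` have the size of
the fibre over `B`. -/
lemma card_fibre (hp : p ≠ 2) (B : Matrix n n ℤ_[p]) (hB : B.IsSymm) (hBd : B.det ≠ 0) (a : ℕ)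
    (ha : B.det.valuation + 1 ≤ a) (t : Sym2 n → ZMod (p ^ (a + 1)))
    (ht : symMat (fun z => red p (a.le_add_right 1) (t z)) = rmat p a B) :
    Nat.card {X : Matrix n n (ZMod (p ^ (a + 1))) // Xᵀ * rmat p (a + 1) B * X = symMat t} =
      KM.Acount p B B (a + 1) := by
  choose s hs using fun z => toZModPow_surjective p (a + 1) (t z)
  have hst : rmat p (a + 1) (symMat s) = symMat t := by
    ext i j
    simp [rmat, symMat, hs]
  obtain ⟨U, ⟨u, rfl⟩, hUT⟩ := exists_isUnit_transform p hp B (symMat s) hB (symMat_isSymm s) hBd a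
    ha (by rw [← ht]; ext i j; simp [rmat, symMat, ← hs, red_toZModPow])
  rw [Acount_eq p hp, ← hst, ← hUT]
  refine (Nat.card_congr ((Units.mulRight u).subtypeEquiv fun X => ?_)).symm
  rw [Units.mulRight_apply, Matrix.transpose_mul]
  constructor
  · intro h
    have e : (u : Matrix n n (ZMod (p ^ (a + 1))))ᵀ * Xᵀ * rmat p (a + 1) B * (X * u) =
        (u : Matrix n n (ZMod (p ^ (a + 1))))ᵀ * (Xᵀ * rmat p (a + 1) B * X) * u := by
      simp only [Matrix.mul_assoc]
    rw [e, h]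
  · intro h
    have hu : IsUnit (u : Matrix n n (ZMod (p ^ (a + 1)))) := u.isUnit
    have hut : IsUnit ((u : Matrix n n (ZMod (p ^ (a + 1))))ᵀ) :=
      (Matrix.isUnit_transpose _).mpr hu
    refine hu.mul_right_cancel (hut.mul_left_cancel ?_)
    simpa only [Matrix.mul_assoc] using h

/-- Counting `{X mod p^(a+1) | X[B] ≡ B mod p^a}` in two ways: over the residues of `X` modulo
`p^a`, and over the values of `X[B]` modulo `p^(a+1)`. -/
lemma Acount_succ (hp : p ≠ 2) (B : Matrix n n ℤ_[p]) (hB : B.IsSymm) (hBd : B.det ≠ 0) (a : ℕ)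
    (ha : B.det.valuation + 1 ≤ a) :
    p ^ (Fintype.card n * Fintype.card n) * KM.Acount p B B a =
      p ^ (Nat.choose (Fintype.card n + 1) 2) * KM.Acount p B B (a + 1) := by
  have key := card_matrix_comp_red p (a.le_add_right 1)
    (fun X : Matrix n n (ZMod (p ^ a)) => Xᵀ * rmat p a B * X = rmat p a B)
  rw [Nat.add_sub_cancel_left, one_mul, ← Acount_eq p hp] at key
  rw [← key]
  obtain ⟨tB, htB⟩ := exists_symMat_eq (A := rmat p a B)
    (by rw [Matrix.IsSymm, ← rmat_transpose, hB.eq])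
  have hT : Nat.card {t : Sym2 n → ZMod (p ^ (a + 1)) //
      symMat (fun z => red p (a.le_add_right 1) (t z)) = rmat p a B} =
      p ^ (Nat.choose (Fintype.card n + 1) 2) := by
    have := card_comp_red p (ι := Sym2 n) (a.le_add_right 1) (fun t => symMat t = rmat p a B)
    rw [this, Nat.add_sub_cancel_left, one_mul, Nat.card_eq_fintype_card,
      Sym2.card]
    have h1 : Nat.card {t : Sym2 n → ZMod (p ^ a) // symMat t = rmat p a B} = 1 := by
      rw [Nat.card_eq_one_iff_unique]
      exact ⟨⟨fun x y => Subtype.ext (symMat_injective (x.2.trans y.2.symm))⟩, ⟨⟨tB, htB⟩⟩⟩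
    rw [h1, mul_one]
  rw [← hT]
  have e : {X : Matrix n n (ZMod (p ^ (a + 1))) //
        (X.map (red p (a.le_add_right 1)))ᵀ * rmat p a B * X.map (red p (a.le_add_right 1)) =
          rmat p a B} ≃
      Σ t : {t : Sym2 n → ZMod (p ^ (a + 1)) //
        symMat (fun z => red p (a.le_add_right 1) (t z)) = rmat p a B},
        {X : Matrix n n (ZMod (p ^ (a + 1))) // Xᵀ * rmat p (a + 1) B * X = symMat t.1} := by
    have hred : ∀ X : Matrix n n (ZMod (p ^ (a + 1))),
        (Xᵀ * rmat p (a + 1) B * X).map (red p (a.le_add_right 1)) =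
          (X.map (red p (a.le_add_right 1)))ᵀ * rmat p a B * X.map (red p (a.le_add_right 1)) := by
      intro X
      rw [Matrix.map_mul, Matrix.map_mul, rmat_red, Matrix.transpose_map]
    have hsym : ∀ X : Matrix n n (ZMod (p ^ (a + 1))), ∃ t,
        symMat t = Xᵀ * rmat p (a + 1) B * X := by
      intro X
      refine exists_symMat_eq ?_
      rw [Matrix.IsSymm, Matrix.transpose_mul, Matrix.transpose_mul, Matrix.transpose_transpose,
        ← rmat_transpose, hB.eq, Matrix.mul_assoc]
    choose τ hτ using hsym
    refine
      { toFun := fun X => ⟨⟨τ X.1, ?_⟩, ⟨X.1, (hτ X.1).symm⟩⟩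
        invFun := fun z => ⟨z.2.1, ?_⟩
        left_inv := fun X => rfl
        right_inv := ?_ }
    · refine Eq.trans ?_ X.2
      rw [← hred, ← hτ]
      rfl
    · rw [← hred, z.2.2]
      exact z.1.2
    · rintro ⟨⟨t, ht⟩, ⟨X, hX⟩⟩
      have : t = τ X := symMat_injective ((hτ X).trans hX).symm
      subst this
      rfl
  rw [Nat.card_congr e, Nat.card_sigma,
    Finset.sum_congr rfl (fun t _ => card_fibre p hp B hB hBd a ha t.1 t.2)]
  simp [Nat.card_eq_fintype_card]

end Stable

/-! ### The limit -/

/-- The sequence whose limit is `α_p(A)`, for `A` of size `m`. -/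
def normCount (p : ℕ) [Fact p.Prime] {m : ℕ} (A : Matrix (Fin m) (Fin m) ℤ_[p]) (a : ℕ) : ℝ :=
  (2 : ℝ) ^ (-1 : ℤ) * (p : ℝ) ^ ((a : ℤ) * (-((m : ℤ) * m) + ((m + 1).choose 2 : ℕ))) *
    (KM.Acount p A A a : ℝ)

lemma choose_cast (m : ℕ) : ((m : ℤ) * ((m : ℤ) + 1)) / 2 = (((m + 1).choose 2 : ℕ) : ℤ) := by
  rw [Nat.choose_two_right, Nat.add_sub_cancel]
  push_cast
  rw [mul_comm]

lemma locDens_eq (p : ℕ) [Fact p.Prime] {m : ℕ} (A : Matrix (Fin m) (Fin m) ℤ_[p]) :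
    KM.locDens p A = limUnder atTop (normCount p A) := by
  unfold KM.locDens KM.locDensPair normCount
  simp only [Fintype.card_fin, if_true, choose_cast]

lemma normCount_succ (p : ℕ) [Fact p.Prime] (hp : p ≠ 2) {m : ℕ}
    (B : Matrix (Fin m) (Fin m) ℤ_[p]) (hB : B.IsSymm) (hBd : B.det ≠ 0) (a : ℕ)
    (ha : B.det.valuation + 1 ≤ a) : normCount p B (a + 1) = normCount p B a := by
  have hp0 : (p : ℝ) ≠ 0 := Nat.cast_ne_zero.mpr (Fact.out : p.Prime).ne_zero
  have key := congrArg (Nat.cast : ℕ → ℝ) (Acount_succ p hp B hB hBd a ha)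
  rw [Fintype.card_fin] at key
  push_cast at key
  set C := (m + 1).choose 2
  have e : (p : ℝ) ^ (((a + 1 : ℕ) : ℤ) * (-((m : ℤ) * m) + (C : ℕ))) * (p : ℝ) ^ (m * m) =
      (p : ℝ) ^ ((a : ℤ) * (-((m : ℤ) * m) + (C : ℕ))) * (p : ℝ) ^ C := by
    rw [← zpow_natCast, ← zpow_natCast, ← zpow_add₀ hp0, ← zpow_add₀ hp0]
    congr 1
    push_cast
    ring
  have hpm : (p : ℝ) ^ (m * m) ≠ 0 := pow_ne_zero _ hp0
  unfold normCount
  refine mul_right_cancel₀ hpm ?_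
  linear_combination (2 : ℝ) ^ (-1 : ℤ) * (KM.Acount p B B (a + 1) : ℝ) * e -
    (2 : ℝ) ^ (-1 : ℤ) * (p : ℝ) ^ ((a : ℤ) * (-((m : ℤ) * m) + (C : ℕ))) * key

lemma exists_tendsto_normCount (p : ℕ) [Fact p.Prime] (hp : p ≠ 2) {m : ℕ}
    (B : Matrix (Fin m) (Fin m) ℤ_[p]) (hB : B.IsSymm) (hBd : B.det ≠ 0) :
    ∃ x, Tendsto (normCount p B) atTop (nhds x) := by
  refine ⟨normCount p B (B.det.valuation + 1),
    tendsto_atTop_of_eventually_const (i₀ := B.det.valuation + 1) fun a ha => ?_⟩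
  induction a, ha using Nat.le_induction with
  | base => rfl
  | succ a ha ih => rw [normCount_succ p hp B hB hBd a ha, ih]

lemma normCount_scale (p : ℕ) [Fact p.Prime] (hp : p ≠ 2) {m : ℕ}
    (B : Matrix (Fin m) (Fin m) ℤ_[p]) (r : ℕ) (d : ℤ_[p]) (hd : IsUnit d) (a : ℕ) :
    normCount p (((p : ℤ_[p]) ^ r * d) • B) (a + r) =
      (p : ℝ) ^ (r * (m + 1).choose 2) * normCount p B a := by
  have hp0 : (p : ℝ) ≠ 0 := Nat.cast_ne_zero.mpr (Fact.out : p.Prime).ne_zero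
  unfold normCount
  rw [Acount_scale p hp B r d hd a, Fintype.card_fin]
  set C := (m + 1).choose 2
  have e : (p : ℝ) ^ (((a + r : ℕ) : ℤ) * (-((m : ℤ) * m) + (C : ℕ))) *
      (p : ℝ) ^ (r * (m * m)) =
      (p : ℝ) ^ (r * C) * (p : ℝ) ^ ((a : ℤ) * (-((m : ℤ) * m) + (C : ℕ))) := by
    rw [← zpow_natCast, ← zpow_natCast, ← zpow_add₀ hp0, ← zpow_add₀ hp0]
    congr 1
    push_cast
    ring
  push_cast at e ⊢
  linear_combination (2 : ℝ) ^ (-1 : ℤ) * (KM.Acount p B B a : ℝ) * e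

end KMaux

/-- for odd `p`, `α_p(p^r d B) = p^{r m(m+1)/2} α_p(B)`. -/
theorem statement11 (p : ℕ) [Fact p.Prime] (hp : p ≠ 2) (m : ℕ) (hm : 1 ≤ m)
    (B : Matrix (Fin m) (Fin m) ℤ_[p]) (hBs : B.IsSymm) (hBd : B.det ≠ 0)
    (r : ℕ) (d : ℤ_[p]) (hd : IsUnit d) :
    KM.locDens p (((p : ℤ_[p]) ^ r * d) • B) =
      (p : ℝ) ^ (r * (m * (m + 1) / 2)) * KM.locDens p B := by
  obtain ⟨x, hx⟩ := KMaux.exists_tendsto_normCount p hp B hBs hBd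
  have hC : m * (m + 1) / 2 = (m + 1).choose 2 := by
    rw [Nat.choose_two_right, Nat.add_sub_cancel, mul_comm]
  have hlim : Tendsto (KMaux.normCount p (((p : ℤ_[p]) ^ r * d) • B)) atTop
      (nhds ((p : ℝ) ^ (r * (m + 1).choose 2) * x)) := by
    rw [← tendsto_add_atTop_iff_nat r]
    simp only [KMaux.normCount_scale p hp B r d hd]
    exact hx.const_mul _
  rw [KMaux.locDens_eq, KMaux.locDens_eq, hx.limUnder_eq, hlim.limUnder_eq, hC]
end
end

section
/- Let p be an odd prime, m ≥ 1, and 1 ≤ n₀ ≤ m. Let U₁ ∈ GL_{n₀}(ℤ_p) ∩ S_{n₀}(ℤ_p) be a unimodular symmetric matrix and B₁ ∈ S_{m-n₀}(ℤ_p)^× (the empty 0×0 matrix if n₀ = m, with the convention α_p(pB₁) = 1). Set r(n₀) = 0 if n₀ = m and r(n₀) = 1 otherwise. Then α_p(pB₁ ⊥ U₁) = 2^{r(n₀)} · α_p(pB₁) · C, where C = [∏_{i=1}^{n₀/2}(1 - p^{-2i})] · (1 + χ_p((-1)^{n₀/2} det U₁) p^{-n₀/2})^{-1} if n₀ is even,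 and C = ∏_{i=1}^{(n₀-1)/2}(1 - p^{-2i}) if n₀ is odd. -/
/-!
The local density `α_p(A)` of a nondegenerate symmetric matrix `A` of size `m` is half the eventual
value of `N_a(A) / p ^ (a m(m-1)/2)`, where `N_a(A)` is the number of matrices `X` modulo `p ^ a`
with `A[X] = A` (`Acount_eq`, `density_exponent`, `locDens_eq`; for odd `p` the parity condition is
empty). The theorem follows from three counting results.

*Splitting* (`natCard_block`). Over a finite ring in which `2` is invertible and `ϖ` is nilpotent,
the isometries of `ϖ B ⊥ U` with `U` unimodular are as numerous as the triples formed by an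
arbitrary off-diagonal block, an isometry of `U` and an isometry of `ϖ B`. The point is that the
blocks satisfy the isometry equations of `U` and of `ϖ B` up to perturbations `U + ϖ (…)` and
`ϖ (B + ϖ B N B)`, and these can be removed by an invertible change of variables
(`exists_conj`). With `ϖ = p` in `ℤ / p ^ a` this gives
`N_a(pB ⊥ U) = p ^ (a k n) N_a(U) N_a(pB)`, which is multiplicativity after normalization.

*Stability* (`natCard_isom_succ`). Once `a` exceeds the valuation of `det A`, every symmetric
`A + p ^ a T` is congruent to `A` modulo `p ^ (a + 1)`. Counting the solutions of `A[X] ≡ A` modulo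
`p ^ a` in matrices modulo `p ^ (a + 1)` in two ways (`natCard_isom_lift`) then gives
`N_{a+1}(A) = p ^ (m(m-1)/2) N_a(A)`. So the normalized counts are eventually constant, and for
unimodular `U` they are constant from `a = 1` on.

*The residue field* (`natCard_isom_field`). The group of isometries of a nondegenerate form over
`𝔽_q`, `q` odd, acts transitively on vectors of a given nonzero norm, by reflections
(`exists_isom_mulVec`). After diagonalization its order is therefore a product of representation
numbers of diagonal forms, which are computed from a Jacobi sum (`sphereCard_formula`). This
produces the factor `2 C`, with the quadratic character of the reduced discriminant in place of
`χ_p`; the two agree by Hensel's lemma (`chiOdd_eq`).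

Hence `α_p(pB ⊥ U) = (1/2) (2 C) (2 α_p(pB))`. For the empty matrix `B` the normalized count is `1`,
so there the factor `2 α_p(pB)` is `1`, which explains the exponent `r(n₀)`.
-/

open Matrix Filter

open scoped Classical

noncomputable section

namespace KM

/-! ### Counting and conjugation of symmetric matrices -/

theorem natCard_of_fibers {α β : Type*} [Finite α] [Finite β] (f : α → β) (c : ℕ)
    (h : ∀ b, Nat.card {a // f a = b} = c) : Nat.card α = Nat.card β * c := by
  have : Fintype β := Fintype.ofFinite β
  rw [Nat.card_congr (Equiv.sigmaFiberEquiv f).symm, Nat.card_sigma]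
  simp [h]

theorem isUnit_det_one_add {R : Type*} [CommRing R] {n : Type*} [Fintype n] [DecidableEq n]
    {ϖ : R} (h : IsNilpotent ϖ) (M : Matrix n n R) : IsUnit (1 + ϖ • M).det := by
  rw [← Matrix.isUnit_iff_isUnit_det]
  obtain ⟨j, hj⟩ := h
  exact IsNilpotent.isUnit_one_add ⟨j, by rw [smul_pow, hj, zero_smul]⟩

/-- If `2` is invertible and `ϖ` is nilpotent, then `B + ϖ B N B` is congruent to `B`, although `B`
need not be invertible. The approximate square root `V = 1 + (ϖ / 2) N B` of `1 + ϖ N B` gives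
`B[V] = B + ϖ B N B + O(ϖ ^ 2)` with an error again of the form `B (…) B`, so the claim for
`ϖ ^ 2` implies the claim for `ϖ`. -/
theorem exists_conj {R : Type*} [CommRing R] {n : Type*} [Fintype n] [DecidableEq n]
    (t : R) (ht : t * 2 = 1) (B : Matrix n n R) (hB : B.IsSymm) (j : ℕ) :
    ∀ (ϖ : R) (_ : ϖ ^ (2 ^ j) = 0) (N : Matrix n n R) (_ : N.IsSymm),
      ∃ W : Matrix n n R, IsUnit W.det ∧ Wᵀ * B * W = B + ϖ • (B * N * B) := by
  induction j with
  | zero =>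
    intro ϖ h N _
    refine ⟨1, by simp, ?_⟩
    have : ϖ = 0 := by simpa using h
    simp [this]
  | succ j ih =>
    intro ϖ h N hN
    set V : Matrix n n R := 1 + ϖ • (t • (N * B)) with hV
    clear_value V
    have hVu : IsUnit V.det := hV ▸ isUnit_det_one_add ⟨_, h⟩ _
    have hBV : B * V = Vᵀ * B := by
      simp [hV, hB.eq, hN.eq, mul_add, add_mul, mul_assoc]
    have hVV : V * V⁻¹ = 1 := Matrix.mul_nonsing_inv _ hVu
    obtain ⟨W, hW, hWB⟩ := ih (ϖ ^ 2) (by rw [← pow_mul, ← pow_succ']; exact h)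
      (-(t * t) • (V⁻¹ * (N * B * N) * V⁻¹ᵀ)) (by
        simp [Matrix.IsSymm, hB.eq, hN.eq, mul_assoc])
    refine ⟨W * V, by rw [det_mul]; exact hW.mul hVu, ?_⟩
    have e1 : (W * V)ᵀ * B * (W * V) = Vᵀ * (Wᵀ * B * W) * V := by
      simp [mul_assoc]
    -- Conjugating by `V` undoes the factors `V⁻¹`, because `B V = Vᵀ B`.
    have e2 : Vᵀ * (B * (V⁻¹ * (N * B * N) * V⁻¹ᵀ) * B) * V = B * (N * B * N) * B := by
      calc _ = (Vᵀ * B) * V⁻¹ * (N * B * N) * V⁻¹ᵀ * (B * V) := by simp only [mul_assoc]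
        _ = B * (V * V⁻¹) * (N * B * N) * (V⁻¹ᵀ * Vᵀ) * B := by
            rw [hBV, ← hBV]; simp only [mul_assoc]
            rw [hBV]
        _ = _ := by
          rw [hVV, ← transpose_mul, hVV]; simp [mul_assoc]
    have e3 : Vᵀ * B * V = B + ϖ • (B * N * B) + (ϖ ^ 2 * (t * t)) • (B * (N * B * N) * B) := by
      have hs : B + ϖ • (B * N * B) = B + (ϖ * (t * 2)) • (B * N * B) := by rw [ht, mul_one]
      rw [hs, ← hBV, hV]
      simp only [mul_add, add_mul, mul_one, Matrix.mul_smul, Matrix.smul_mul, mul_assoc]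
      module
    rw [e1, hWB, mul_add, add_mul, e3]
    simp only [Matrix.mul_smul, Matrix.smul_mul, e2]
    module

/-- The isometries of the symmetric bilinear form with Gram matrix `A`, as matrices over `R`. -/
abbrev Isom {R : Type*} [CommRing R] {n : Type*} [Fintype n] (A : Matrix n n R) : Type _ :=
  {X : Matrix n n R // Xᵀ * A * X = A}

theorem isUnit_det_of_conj {R : Type*} [CommRing R] {n : Type*} [Fintype n] [DecidableEq n]
    {A D A' : Matrix n n R} (hA : IsUnit A'.det) (h : Dᵀ * A * D = A') : IsUnit D.det := by
  rw [← h, det_mul] at hA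
  exact isUnit_of_mul_isUnit_right hA

theorem natCard_conj_left {R : Type*} [CommRing R] {n l : Type*} [Fintype n]
    [DecidableEq n] [Fintype l] {W : Matrix n n R} (hW : IsUnit W.det) (P : Matrix n l R → Prop) :
    Nat.card {X : Matrix n l R // P (W * X)} = Nat.card {X : Matrix n l R // P X} := by
  refine Nat.card_congr ⟨fun X => ⟨W * X.1, X.2⟩, fun X => ⟨W⁻¹ * X.1, ?_⟩, ?_, ?_⟩
  · rw [Matrix.mul_nonsing_inv_cancel_left _ _ hW]; exact X.2
  · intro X; ext1; exact Matrix.nonsing_inv_mul_cancel_left _ _ hW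
  · intro X; ext1; exact Matrix.mul_nonsing_inv_cancel_left _ _ hW

theorem natCard_conj_right {R : Type*} [CommRing R] {n l : Type*} [Fintype n]
    [DecidableEq n] [Fintype l] {W : Matrix n n R} (hW : IsUnit W.det) (P : Matrix l n R → Prop) :
    Nat.card {X : Matrix l n R // P (X * W)} = Nat.card {X : Matrix l n R // P X} := by
  refine Nat.card_congr ⟨fun X => ⟨X.1 * W, X.2⟩, fun X => ⟨X.1 * W⁻¹, ?_⟩, ?_, ?_⟩
  · rw [Matrix.nonsing_inv_mul_cancel_right _ _ hW]; exact X.2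
  · intro X; ext1; exact Matrix.mul_nonsing_inv_cancel_right _ _ hW
  · intro X; ext1; exact Matrix.nonsing_inv_mul_cancel_right _ _ hW

/-- An isometry of `ϖ B ⊥ U`, written in blocks, satisfies three equations: the two off-diagonal
ones are transposes of each other. -/
theorem block_iff {R : Type*} [CommRing R] {k n : Type*} [Fintype k] [Fintype n]
    (ϖ : R) (B : Matrix k k R) (U : Matrix n n R)
    (X : Matrix k k R) (C : Matrix k n R) (Y : Matrix n k R) (D : Matrix n n R)
    (hB : B.IsSymm) (hU : U.IsSymm) :
    (fromBlocks X C Y D)ᵀ * fromBlocks (ϖ • B) 0 0 U * fromBlocks X C Y D =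
      fromBlocks (ϖ • B) 0 0 U ↔
    (ϖ • (Xᵀ * B * X) + Yᵀ * U * Y = ϖ • B) ∧ (ϖ • (Cᵀ * B * X) + Dᵀ * U * Y = 0) ∧
      (ϖ • (Cᵀ * B * C) + Dᵀ * U * D = U) := by
  rw [fromBlocks_transpose, fromBlocks_multiply, fromBlocks_multiply, fromBlocks_inj]
  simp only [Matrix.mul_zero, add_zero, zero_add, Matrix.mul_smul, Matrix.smul_mul]
  refine and_congr_right fun _ => ⟨fun h => h.2, fun h => ⟨?_, h⟩⟩
  have := congrArg transpose h.1
  simpa [hB.eq, hU.eq, Matrix.mul_assoc] using this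

theorem natCard_matrix (R k n : Type*) [Finite R] [Fintype k] [Fintype n] :
    Nat.card (Matrix k n R) = Nat.card R ^ (Fintype.card k * Fintype.card n) := by
  change Nat.card (k → n → R) = _
  rw [Nat.card_fun, Nat.card_fun, ← pow_mul, Nat.card_eq_fintype_card (α := n),
    Nat.card_eq_fintype_card (α := k), mul_comm]

/-! ### Splitting off a unimodular block -/

section block
variable {R : Type*} [CommRing R] [Finite R] {k n : Type*} [Fintype k]
  [Fintype n] [DecidableEq n]

/-- The number of possible right block columns `(C, D)` of an isometry of `ϖ B ⊥ U`. The block `C`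
is arbitrary, and for each `C` the matrices `D` with `U[D] = U - ϖ B[C]` form a coset of the
isometries of `U`, since the right side is congruent to `U`. -/
theorem natCard_lastCol (t : R) (ht : t * 2 = 1) {ϖ : R} (hϖ : IsNilpotent ϖ)
    {B : Matrix k k R} {U : Matrix n n R} (hB : B.IsSymm) (hU : U.IsSymm) (hUu : IsUnit U.det) :
    Nat.card {Z : Matrix k n R × Matrix n n R // ϖ • (Z.1ᵀ * B * Z.1) + Z.2ᵀ * U * Z.2 = U}
      = Nat.card R ^ (Fintype.card k * Fintype.card n) * Nat.card (Isom U) := by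
  rw [natCard_of_fibers (fun Z => Z.1.1) (Nat.card (Isom U))]
  · rw [natCard_matrix]
  · intro C
    have e : Nat.card {Z : {Z : Matrix k n R × Matrix n n R //
        ϖ • (Z.1ᵀ * B * Z.1) + Z.2ᵀ * U * Z.2 = U} // Z.1.1 = C} =
        Nat.card {D : Matrix n n R // ϖ • (Cᵀ * B * C) + Dᵀ * U * D = U} := by
      refine Nat.card_congr ⟨fun Z => ⟨Z.1.1.2, ?_⟩, fun D => ⟨⟨(C, D.1), D.2⟩, rfl⟩, ?_, ?_⟩
      · obtain ⟨⟨⟨C', D⟩, h⟩, rfl⟩ := Z; exact h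
      · rintro ⟨⟨⟨C', D⟩, h⟩, rfl⟩; rfl
      · intro D; rfl
    rw [e]
    obtain ⟨j, hj⟩ := hϖ
    have hUU : U * U⁻¹ = 1 := Matrix.mul_nonsing_inv _ hUu
    have hUU' : U⁻¹ * U = 1 := Matrix.nonsing_inv_mul _ hUu
    have hUi : U⁻¹ᵀ = U⁻¹ := by rw [Matrix.transpose_nonsing_inv, hU.eq]
    obtain ⟨W, hW, hWU⟩ := exists_conj t ht U hU j ϖ
      (pow_eq_zero_of_le (Nat.lt_two_pow_self).le hj)
      (-(U⁻¹ * (Cᵀ * B * C) * U⁻¹)) (by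
        simp [Matrix.IsSymm, hUi, hB.eq, Matrix.mul_assoc])
    have hWU' : Wᵀ * U * W = U - ϖ • (Cᵀ * B * C) := by
      rw [hWU, sub_eq_add_neg, ← smul_neg]
      congr 2
      calc _ = - ((U * U⁻¹) * (Cᵀ * B * C) * (U⁻¹ * U)) := by
            simp only [Matrix.mul_assoc, Matrix.mul_neg, Matrix.neg_mul]
        _ = _ := by rw [hUU, hUU', Matrix.one_mul, Matrix.mul_one]
    rw [← natCard_conj_right hW]
    refine Nat.card_congr (Equiv.subtypeEquivRight fun X => ?_)
    rw [← eq_sub_iff_add_eq', ← hWU']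
    have : (X * W)ᵀ * U * (X * W) = Wᵀ * (Xᵀ * U * X) * W := by simp [Matrix.mul_assoc]
    rw [this]
    constructor
    · intro h
      have h2 := congrArg (fun Z => W⁻¹ᵀ * Z * W⁻¹) h
      have hWW : W * W⁻¹ = 1 := Matrix.mul_nonsing_inv _ hW
      have hWT : W⁻¹ᵀ * Wᵀ = 1 := by rw [← transpose_mul, hWW, transpose_one]
      have key : ∀ M : Matrix n n R, W⁻¹ᵀ * (Wᵀ * M * W) * W⁻¹ = M := fun M => by
        calc _ = (W⁻¹ᵀ * Wᵀ) * M * (W * W⁻¹) := by simp only [Matrix.mul_assoc]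
          _ = M := by rw [hWT, hWW, Matrix.one_mul, Matrix.mul_one]
      simpa only [key] using h2
    · intro h; rw [h]

/-- The isometries of `ϖ B ⊥ U` for unimodular `U` and nilpotent `ϖ`. Given the right block column
`(C, D)`, the lower left block `Y` is determined by the upper left block `X`, and substituting it
turns the remaining equation into `ϖ (B + ϖ B N B)[X] = ϖ B`. By `exists_conj` this says that
`W X` is an isometry of `ϖ B` for a fixed invertible `W`. -/
theorem natCard_block [DecidableEq k] (t : R) (ht : t * 2 = 1) {ϖ : R} (hϖ : IsNilpotent ϖ)
    {B : Matrix k k R} {U : Matrix n n R} (hB : B.IsSymm) (hU : U.IsSymm) (hUu : IsUnit U.det) :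
    Nat.card (Isom (fromBlocks (ϖ • B) 0 0 U)) =
      Nat.card R ^ (Fintype.card k * Fintype.card n) * Nat.card (Isom U) *
        Nat.card (Isom (ϖ • B)) := by
  rw [← natCard_lastCol t ht hϖ hB hU hUu]
  have hlast : ∀ Z : Isom (fromBlocks (ϖ • B) 0 0 U),
      ϖ • (Z.1.toBlocks₁₂ᵀ * B * Z.1.toBlocks₁₂) + Z.1.toBlocks₂₂ᵀ * U * Z.1.toBlocks₂₂ = U := by
    intro Z
    have := Z.2
    rw [← fromBlocks_toBlocks Z.1, block_iff _ _ _ _ _ _ _ hB hU] at this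
    exact this.2.2
  refine natCard_of_fibers (fun Z => ⟨(Z.1.toBlocks₁₂, Z.1.toBlocks₂₂), hlast Z⟩) _ ?_
  rintro ⟨⟨C, D⟩, hCD⟩
  simp only at hCD
  have hDu : IsUnit (Dᵀ * U).det := by
    obtain ⟨j, hj⟩ := hϖ
    have h1 : Dᵀ * U * D = U * (1 + ϖ • (U⁻¹ * -(Cᵀ * B * C))) := by
      rw [mul_add, mul_one, Matrix.mul_smul, Matrix.mul_nonsing_inv_cancel_left _ _ hUu]
      rw [← eq_sub_iff_add_eq'] at hCD
      rw [hCD, smul_neg, sub_eq_add_neg]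
    have h2 : IsUnit (Dᵀ * U * D).det := by
      rw [h1, det_mul]; exact hUu.mul (isUnit_det_one_add ⟨j, hj⟩ _)
    rw [det_mul] at h2
    exact isUnit_of_mul_isUnit_left h2
  set E := (Dᵀ * U)⁻¹ with hE
  have hE1 : Dᵀ * U * E = 1 := Matrix.mul_nonsing_inv _ hDu
  have hE2 : E * (Dᵀ * U) = 1 := Matrix.nonsing_inv_mul _ hDu
  clear_value E
  obtain ⟨j, hj⟩ := hϖ
  obtain ⟨W, hW, hWB⟩ := exists_conj t ht B hB j ϖ
      (pow_eq_zero_of_le (Nat.lt_two_pow_self).le hj)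
      (C * (Eᵀ * U * E) * Cᵀ) (by
        simp [Matrix.IsSymm, hU.eq, Matrix.mul_assoc])
  -- The off-diagonal equation determines the lower left block.
  have hY : ∀ (X : Matrix k k R) (Y : Matrix n k R),
      ϖ • (Cᵀ * B * X) + Dᵀ * U * Y = 0 ↔ Y = -(ϖ • (E * (Cᵀ * B * X))) := by
    intro X Y
    constructor
    · intro h
      have h2 := congrArg (fun Z => E * Z) h
      simp only [Matrix.mul_add, Matrix.mul_smul, Matrix.mul_zero] at h2
      rw [← Matrix.mul_assoc E (Dᵀ * U), hE2, Matrix.one_mul] at h2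
      rw [eq_neg_iff_add_eq_zero, add_comm]; exact h2
    · rintro rfl
      rw [Matrix.mul_neg, Matrix.mul_smul, ← Matrix.mul_assoc (Dᵀ * U), hE1, Matrix.one_mul,
        add_neg_cancel]
  have hX : ∀ X : Matrix k k R,
      (ϖ • (Xᵀ * B * X) + (-(ϖ • (E * (Cᵀ * B * X))))ᵀ * U * (-(ϖ • (E * (Cᵀ * B * X))))
        = ϖ • B) ↔ (W * X)ᵀ * (ϖ • B) * (W * X) = ϖ • B := by
    intro X
    have : (W * X)ᵀ * (ϖ • B) * (W * X) = ϖ • (Xᵀ * (Wᵀ * B * W) * X) := by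
      simp [Matrix.mul_assoc]
    rw [this, hWB]
    apply Eq.congr_left
    simp only [transpose_neg, transpose_smul, transpose_mul, hB.eq, transpose_transpose,
      Matrix.mul_add, Matrix.add_mul, Matrix.mul_smul, Matrix.smul_mul, Matrix.mul_neg,
      Matrix.neg_mul, Matrix.mul_assoc, smul_neg, neg_neg, smul_add, smul_smul]
  rw [← natCard_conj_left hW]
  refine Nat.card_congr ⟨fun Z => ⟨Z.1.1.toBlocks₁₁, ?_⟩, fun X =>
    ⟨⟨fromBlocks X.1 C (-(ϖ • (E * (Cᵀ * B * X.1)))) D, ?_⟩, ?_⟩, ?_, ?_⟩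
  · obtain ⟨⟨Z, hZ⟩, hZ'⟩ := Z
    rw [← fromBlocks_toBlocks Z, block_iff _ _ _ _ _ _ _ hB hU] at hZ
    simp only [Subtype.mk.injEq, Prod.mk.injEq] at hZ'
    rw [hZ'.1, hZ'.2, hY] at hZ
    simp only
    rw [← hX, ← hZ.2.1]
    exact hZ.1
  · rw [block_iff _ _ _ _ _ _ _ hB hU, hX, hY]
    exact ⟨X.2, rfl, hCD⟩
  · simp
  · rintro ⟨⟨Z, hZ⟩, hZ'⟩
    rw [← fromBlocks_toBlocks Z, block_iff _ _ _ _ _ _ _ hB hU] at hZ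
    simp only [Subtype.mk.injEq, Prod.mk.injEq] at hZ'
    rw [hZ'.1, hZ'.2, hY] at hZ
    ext1; ext1
    change _ = Z
    conv_rhs => rw [← fromBlocks_toBlocks Z, hZ'.1, hZ'.2, hZ.2.1]
  · intro X; simp
end block

/-! ### Representation numbers of diagonal forms over a finite field -/

section sphere
variable {F : Type*} [Field F] [Fintype F] [DecidableEq F]

theorem sum_comp_sq (hF : ringChar F ≠ 2) (g : F → ℤ) :
    ∑ x : F, g (x ^ 2) = ∑ y : F, (quadraticChar F y + 1) * g y := by
  rw [← Finset.sum_fiberwise (Finset.univ : Finset F) (fun x => x ^ 2)]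
  refine Finset.sum_congr rfl fun y _ => ?_
  rw [Finset.sum_congr rfl (g := fun _ => g y)
    (fun x hx => by rw [(Finset.mem_filter.1 hx).2]), Finset.sum_const, nsmul_eq_mul,
    ← quadraticChar_card_sqrts hF y]
  congr 3
  ext x; simp

/-- For `c ≠ 0` the sum reduces to the Jacobi sum of the quadratic character with itself. -/
theorem sum_quadraticChar_sub_sq (hF : ringChar F ≠ 2) {u : F} (hu : u ≠ 0) (c : F) :
    ∑ x : F, quadraticChar F (c - u * x ^ 2) =
      quadraticChar F (-u) * (Fintype.card F * (if c = 0 then 1 else 0) - 1) := by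
  by_cases hc : c = 0
  · have h1 : ∀ x : F, quadraticChar F (c - u * x ^ 2) =
        quadraticChar F (-u) * (1 - if x = 0 then 1 else 0) := by
      intro x
      rw [hc, zero_sub, ← neg_mul, map_mul]
      by_cases hx : x = 0
      · simp [hx]
      · rw [quadraticChar_sq_one' hx]; simp [hx]
    simp_rw [h1, ← Finset.mul_sum, Finset.sum_sub_distrib]
    simp [hc]
  · have hJ := jacobiSum_nontrivial_inv (quadraticChar_ne_one hF)
    rw [(quadraticChar_isQuadratic F).inv, jacobiSum] at hJ
    rw [sum_comp_sq hF (fun y => quadraticChar F (c - u * y))]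
    have h2 : ∑ y : F, quadraticChar F (c - u * y) = 0 := by
      rw [← quadraticChar_sum_zero hF]
      refine Function.Bijective.sum_comp (e := fun y => c - u * y)
        ((Finite.injective_iff_bijective).1 ?_) _
      intro a b hab
      simpa [hu] using hab
    simp_rw [add_mul, one_mul, Finset.sum_add_distrib, h2, add_zero]
    have h3 : ∑ y : F, quadraticChar F y * quadraticChar F (c - u * y) =
        ∑ s : F, quadraticChar F u * (quadraticChar F s * quadraticChar F (1 - s)) := by
      have hb : Function.Bijective (fun s : F => c * u⁻¹ * s) :=
        Finite.injective_iff_bijective.1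
          (mul_right_injective₀ (mul_ne_zero hc (inv_ne_zero hu)))
      rw [← hb.sum_comp]
      refine Finset.sum_congr rfl fun s _ => ?_
      have : c - u * (c * u⁻¹ * s) = c * (1 - s) := by field_simp
      rw [this, map_mul, map_mul, map_mul]
      have e1 := quadraticChar_sq_one hc
      have e2 : quadraticChar F u⁻¹ = quadraticChar F u := by
        have : u⁻¹ = u * (u⁻¹) ^ 2 := by field_simp
        rw [this, map_mul, quadraticChar_sq_one' (inv_ne_zero hu), mul_one]
      rw [e2]
      linear_combination quadraticChar F u * quadraticChar F s * quadraticChar F (1 - s) * e1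
    rw [h3, ← Finset.mul_sum, hJ, neg_eq_neg_one_mul u, map_mul]
    simp [hc, mul_comm]

/-- The number of vectors `x` with `∑ dᵢ xᵢ² = c`. -/
def sphereCard {F : Type*} [Field F] {n : ℕ} (d : Fin n → F) (c : F) : ℕ :=
  Nat.card {x : Fin n → F // ∑ i, d i * x i ^ 2 = c}

theorem sphereCard_succ {F : Type*} [Field F] [Fintype F] {n : ℕ} (d : Fin (n + 1) → F) (c : F) :
    sphereCard d c = ∑ x : F, sphereCard (fun i => d i.succ) (c - d 0 * x ^ 2) := by
  unfold sphereCard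
  rw [← Nat.card_sigma]
  refine Nat.card_congr ⟨fun x => ⟨x.1 0, fun i => x.1 i.succ, ?_⟩,
    fun y => ⟨Fin.cons y.1 y.2.1, ?_⟩, ?_, ?_⟩
  · have := x.2
    rw [Fin.sum_univ_succ] at this
    exact eq_sub_of_add_eq' this
  · rw [Fin.sum_univ_succ]
    simp only [Fin.cons_zero, Fin.cons_succ]
    rw [y.2.2]; ring
  · intro x; ext1; exact Fin.cons_self_tail x.1
  · rintro ⟨a, y, hy⟩; rfl

/-- The representation numbers of nondegenerate diagonal forms in `2 m` and in `2 m + 1` variables.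
The even formula is multiplied by `q`, so that the case `m = 0` involves no division. Summing over
one variable leads from each parity to the next. -/
theorem sphereCard_formula (hF : ringChar F ≠ 2) (m : ℕ) :
    (∀ (d : Fin (2 * m) → F) (_ : ∀ i, d i ≠ 0) (c : F),
      (Fintype.card F : ℤ) * sphereCard d c = (Fintype.card F : ℤ) ^ (2 * m) +
        quadraticChar F ((-1) ^ m * ∏ i, d i) * (Fintype.card F : ℤ) ^ m *
          (Fintype.card F * (if c = 0 then 1 else 0) - 1)) ∧
    (∀ (d : Fin (2 * m + 1) → F) (_ : ∀ i, d i ≠ 0) (c : F),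
      (sphereCard d c : ℤ) = (Fintype.card F : ℤ) ^ (2 * m) +
        quadraticChar F ((-1) ^ m * c * ∏ i, d i) * (Fintype.card F : ℤ) ^ m) := by
  have hq : (Fintype.card F : ℤ) ≠ 0 := by exact_mod_cast Fintype.card_ne_zero
  have step : ∀ m : ℕ, (∀ (d : Fin (2 * m) → F) (_ : ∀ i, d i ≠ 0) (c : F),
      (Fintype.card F : ℤ) * sphereCard d c = (Fintype.card F : ℤ) ^ (2 * m) +
        quadraticChar F ((-1) ^ m * ∏ i, d i) * (Fintype.card F : ℤ) ^ m *
          (Fintype.card F * (if c = 0 then 1 else 0) - 1)) →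
    (∀ (d : Fin (2 * m + 1) → F) (_ : ∀ i, d i ≠ 0) (c : F),
      (sphereCard d c : ℤ) = (Fintype.card F : ℤ) ^ (2 * m) +
        quadraticChar F ((-1) ^ m * c * ∏ i, d i) * (Fintype.card F : ℤ) ^ m) := by
    intro m h d hd c
    apply mul_left_cancel₀ hq
    rw [sphereCard_succ]
    push_cast
    rw [Finset.mul_sum]
    simp_rw [h (fun i => d i.succ) (fun i => hd _)]
    have hsum : ∑ x : F, (if c - d 0 * x ^ 2 = 0 then (1 : ℤ) else 0) =
        quadraticChar F (c * d 0) + 1 := by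
      have : ∀ x : F, (c - d 0 * x ^ 2 = 0) ↔ x ^ 2 = c * d 0 * ((d 0)⁻¹) ^ 2 := by
        intro x
        have := hd 0
        constructor
        · intro h
          rw [sub_eq_zero] at h
          rw [h]; field_simp
        · intro h
          rw [h]; field_simp; ring
      simp_rw [this]
      rw [Finset.sum_boole]
      have h2 := quadraticChar_card_sqrts hF (c * d 0 * ((d 0)⁻¹) ^ 2)
      rw [map_mul, quadraticChar_sq_one' (inv_ne_zero (hd 0)), mul_one] at h2
      rw [← h2]
      congr 2
      ext x; simp
    rw [Finset.sum_add_distrib, ← Finset.mul_sum, Finset.sum_sub_distrib, ← Finset.mul_sum, hsum]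
    rw [Fin.prod_univ_succ]
    have hε : quadraticChar F ((-1) ^ m * c * (d 0 * ∏ i : Fin (2 * m), d i.succ)) =
        quadraticChar F (c * d 0) * quadraticChar F ((-1) ^ m * ∏ i : Fin (2 * m), d i.succ) := by
      rw [← map_mul]; congr 1; ring
    rw [hε]
    simp only [Finset.sum_const, Finset.card_univ, nsmul_eq_mul, mul_one]
    ring
  have even : ∀ (d : Fin (2 * m) → F) (_ : ∀ i, d i ≠ 0) (c : F),
      (Fintype.card F : ℤ) * sphereCard d c = (Fintype.card F : ℤ) ^ (2 * m) +
        quadraticChar F ((-1) ^ m * ∏ i, d i) * (Fintype.card F : ℤ) ^ m *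
          (Fintype.card F * (if c = 0 then 1 else 0) - 1) := by
    induction m with
    | zero =>
      intro d _ c
      have : (sphereCard d c : ℤ) = if c = 0 then 1 else 0 := by
        unfold sphereCard
        by_cases hc : c = 0
        · simp [hc]
        · simp [hc, Ne.symm hc]
      simp [this]
    | succ m ih =>
      intro d hd c
      have hodd := step m ih
      have e : (sphereCard d c : ℤ) = ∑ x : F, (sphereCard (n := 2 * m + 1)
          (fun i => d i.succ) (c - d 0 * x ^ 2) : ℤ) := by
        exact_mod_cast sphereCard_succ (n := 2 * m + 1) d c
      rw [e]
      simp_rw [hodd (fun i => d i.succ) (fun i => hd _)]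
      have hε : ∀ x : F, quadraticChar F ((-1) ^ m * (c - d 0 * x ^ 2) *
          ∏ i : Fin (2 * m + 1), d i.succ) = quadraticChar F ((-1) ^ m *
          ∏ i : Fin (2 * m + 1), d i.succ) * quadraticChar F (c - d 0 * x ^ 2) := by
        intro x; rw [← map_mul]; congr 1; ring
      simp_rw [hε]
      rw [Finset.sum_add_distrib, ← Finset.sum_mul, ← Finset.mul_sum,
        sum_quadraticChar_sub_sq hF (hd 0)]
      have hε' : quadraticChar F ((-1) ^ (m + 1) * ∏ i, d i) =
          quadraticChar F ((-1) ^ m * ∏ i : Fin (2 * m + 1), d i.succ) *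
            quadraticChar F (-d 0) := by
        rw [← map_mul]; congr 1
        rw [show ∏ i, d i = d 0 * ∏ i : Fin (2 * m + 1), d i.succ from
          Fin.prod_univ_succ (n := 2 * m + 1) d]
        ring
      rw [hε']
      simp only [Finset.sum_const, Finset.card_univ, nsmul_eq_mul]
      ring
  exact ⟨even, step m even⟩
end sphere

/-! ### Orders of finite orthogonal groups -/

section orthogonal
variable {F : Type*} [Field F]

theorem isom_diagonal_iff {n : ℕ} (d : Fin n → F) (X : Matrix (Fin n) (Fin n) F) :
    Xᵀ * diagonal d * X = diagonal d ↔
      ∀ i j, ∑ l, d l * X l i * X l j = if i = j then d i else 0 := by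
  rw [← Matrix.ext_iff]
  refine forall_congr' fun i => forall_congr' fun j => ?_
  rw [Matrix.mul_apply, Matrix.diagonal_apply]
  simp only [Matrix.mul_diagonal, transpose_apply, mul_comm (X _ i)]

/-- The reflection along an anisotropic vector `v` is an isometry. -/
theorem reflection_isom {n : Type*} [Fintype n] [DecidableEq n] {A : Matrix n n F}
    (hA : A.IsSymm) (v : n → F) (hv : v ⬝ᵥ A *ᵥ v ≠ 0) :
    (1 - (2 / (v ⬝ᵥ A *ᵥ v)) • vecMulVec v (A *ᵥ v))ᵀ * A *
      (1 - (2 / (v ⬝ᵥ A *ᵥ v)) • vecMulVec v (A *ᵥ v)) = A := by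
  set Q := v ⬝ᵥ A *ᵥ v with hQ
  have hvA : v ᵥ* A = A *ᵥ v := by rw [← mulVec_transpose, hA.eq]
  have h1 : A * vecMulVec v (A *ᵥ v) = vecMulVec (A *ᵥ v) (A *ᵥ v) := by
    rw [mul_vecMulVec]
  have h2 : vecMulVec (A *ᵥ v) v * A = vecMulVec (A *ᵥ v) (A *ᵥ v) := by
    rw [vecMulVec_mul, hvA]
  have h3 : vecMulVec (A *ᵥ v) (A *ᵥ v) * vecMulVec v (A *ᵥ v) =
      Q • vecMulVec (A *ᵥ v) (A *ᵥ v) := by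
    rw [vecMulVec_mul_vecMulVec, dotProduct_comm, ← hQ]
    ext; simp [vecMulVec_apply]; ring
  rw [transpose_sub, transpose_smul, transpose_one, transpose_vecMulVec, Matrix.sub_mul,
    Matrix.one_mul, Matrix.mul_sub, Matrix.mul_one, Matrix.smul_mul, h2, Matrix.sub_mul,
    Matrix.mul_smul, Matrix.mul_smul, Matrix.smul_mul, h1, h3, smul_smul, smul_smul,
    show 2 / Q * (2 / Q) * Q = 2 / Q + 2 / Q by field_simp; ring]
  module

theorem reflection_apply {n : Type*} [Fintype n] [DecidableEq n] (A : Matrix n n F)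
    (v y : n → F) (c : F) :
    (1 - c • vecMulVec v (A *ᵥ v)) *ᵥ y = y - (c * ((A *ᵥ v) ⬝ᵥ y)) • v := by
  rw [sub_mulVec, one_mulVec, smul_mulVec, vecMulVec_mulVec]
  ext i; simp; ring

/-- Isometries act transitively on the vectors of a given nonzero norm: one of `y - x`, `y + x`
is anisotropic, and the corresponding reflection carries `y` to `x` or `-x`. -/
theorem exists_isom_mulVec (h2 : (2 : F) ≠ 0) {n : Type*} [Fintype n] [DecidableEq n]
    {A : Matrix n n F} (hA : A.IsSymm) {x y : n → F} (hxy : x ⬝ᵥ A *ᵥ x = y ⬝ᵥ A *ᵥ y)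
    (hy : y ⬝ᵥ A *ᵥ y ≠ 0) : ∃ g : Matrix n n F, gᵀ * A * g = A ∧ g *ᵥ y = x := by
  have hsymm : ∀ v w : n → F, v ⬝ᵥ A *ᵥ w = w ⬝ᵥ A *ᵥ v := fun v w => by
    rw [dotProduct_mulVec, ← mulVec_transpose, hA.eq, dotProduct_comm]
  by_cases h : (y - x) ⬝ᵥ A *ᵥ (y - x) = 0
  · have h' : (y + x) ⬝ᵥ A *ᵥ (y + x) ≠ 0 := by
      intro h''
      have : 2 * (2 * (y ⬝ᵥ A *ᵥ y)) = 0 := by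
        simp only [mulVec_add, mulVec_sub, dotProduct_add, add_dotProduct, dotProduct_sub,
          sub_dotProduct, hxy] at h h''
        linear_combination h + h''
      exact hy (by simpa [h2] using this)
    refine ⟨-(1 - (2 / ((y + x) ⬝ᵥ A *ᵥ (y + x))) • vecMulVec (y + x) (A *ᵥ (y + x))), ?_, ?_⟩
    · rw [transpose_neg, Matrix.neg_mul, neg_mul_neg]; exact reflection_isom hA _ h'
    · rw [neg_mulVec, reflection_apply]
      have : 2 / ((y + x) ⬝ᵥ A *ᵥ (y + x)) * ((A *ᵥ (y + x)) ⬝ᵥ y) = 1 := by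
        rw [div_mul_eq_mul_div, div_eq_one_iff_eq h', dotProduct_comm]
        simp only [mulVec_add, dotProduct_add, add_dotProduct, hxy, hsymm x y]
        ring
      rw [this]; simp
  · refine ⟨1 - (2 / ((y - x) ⬝ᵥ A *ᵥ (y - x))) • vecMulVec (y - x) (A *ᵥ (y - x)),
      reflection_isom hA _ h, ?_⟩
    rw [reflection_apply]
    have : 2 / ((y - x) ⬝ᵥ A *ᵥ (y - x)) * ((A *ᵥ (y - x)) ⬝ᵥ y) = 1 := by
      rw [div_mul_eq_mul_div, div_eq_one_iff_eq h, dotProduct_comm]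
      simp only [mulVec_sub, dotProduct_sub, sub_dotProduct, hxy, hsymm x y]
      ring
    rw [this]; simp

/-- An isometry of a diagonal form fixing the first basis vector preserves its orthogonal
complement, and is determined by its restriction to it. -/
theorem natCard_stabilizer {n : ℕ} (d : Fin (n + 1) → F) (hd : d 0 ≠ 0) :
    Nat.card {X : Isom (diagonal d) // X.1 *ᵥ Pi.single 0 1 = Pi.single 0 1} =
      Nat.card (Isom (diagonal fun i : Fin n => d i.succ)) := by
  have hrow : ∀ X : Matrix (Fin (n + 1)) (Fin (n + 1)) F, Xᵀ * diagonal d * X = diagonal d →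
      X *ᵥ Pi.single 0 1 = Pi.single 0 1 →
      (X 0 0 = 1 ∧ ∀ j : Fin n, X j.succ 0 = 0) ∧ ∀ j : Fin n, X 0 j.succ = 0 := by
    intro X h1 h2
    have hc : ∀ l, X l 0 = (Pi.single 0 1 : Fin (n + 1) → F) l := by
      intro l; rw [← h2]; simp
    refine ⟨⟨by simp [hc], fun j => by simp [hc]⟩, fun j => ?_⟩
    have := (isom_diagonal_iff d X).1 h1 0 j.succ
    rw [Fin.sum_univ_succ] at this
    simpa [hc, hd, (Fin.succ_ne_zero j).symm] using this
  refine Nat.card_congr ⟨fun X => ⟨X.1.1.submatrix Fin.succ Fin.succ, ?_⟩,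
    fun Y => ⟨⟨Matrix.of (Fin.cons (Fin.cons 1 fun _ => 0) fun i => Fin.cons 0 (Y.1 i)), ?_⟩, ?_⟩,
      ?_, ?_⟩
  · obtain ⟨⟨X, h1⟩, h2⟩ := X
    obtain ⟨-, h3⟩ := hrow X h1 h2
    rw [isom_diagonal_iff]
    intro i j
    have := (isom_diagonal_iff d X).1 h1 i.succ j.succ
    rw [Fin.sum_univ_succ] at this
    simpa [h3] using this
  · have hY := (isom_diagonal_iff _ _).1 Y.2
    rw [isom_diagonal_iff]
    intro i j
    rw [Fin.sum_univ_succ]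
    refine Fin.cases ?_ (fun i => ?_) i <;> refine Fin.cases ?_ (fun j => ?_) j
    · simp
    · simp [(Fin.succ_ne_zero j).symm]
    · simp
    · simpa using hY i j
  · ext l
    refine Fin.cases ?_ (fun l => ?_) l <;> simp
  · rintro ⟨⟨X, h1⟩, h2⟩
    obtain ⟨⟨h3, h4⟩, h5⟩ := hrow X h1 h2
    ext i j
    refine Fin.cases ?_ (fun i => ?_) i <;> refine Fin.cases ?_ (fun j => ?_) j <;>
      simp [h3, h4, h5]
  · intro Y; ext i j; simp

/-- Orbit-stabilizer for the first basis vector, whose orbit is a full sphere by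
`exists_isom_mulVec`. -/
theorem natCard_isom_diagonal_succ [Fintype F] (h2 : (2 : F) ≠ 0) {n : ℕ}
    (d : Fin (n + 1) → F) (hd : ∀ i, d i ≠ 0) :
    Nat.card (Isom (diagonal d)) =
      sphereCard d (d 0) * Nat.card (Isom (diagonal fun i : Fin n => d i.succ)) := by
  have hQ : ∀ x : Fin (n + 1) → F, x ⬝ᵥ diagonal d *ᵥ x = ∑ i, d i * x i ^ 2 := by
    intro x
    simp only [dotProduct, mulVec_diagonal]
    exact Finset.sum_congr rfl fun i _ => by ring
  have he : (Pi.single 0 1 : Fin (n + 1) → F) ⬝ᵥ diagonal d *ᵥ Pi.single 0 1 = d 0 := by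
    simp
  have hX : ∀ X : Isom (diagonal d), ∀ v : Fin (n + 1) → F,
      (X.1 *ᵥ v) ⬝ᵥ diagonal d *ᵥ (X.1 *ᵥ v) = v ⬝ᵥ diagonal d *ᵥ v := by
    intro X v
    conv_rhs => rw [← X.2]
    rw [← mulVec_mulVec, ← mulVec_mulVec, dotProduct_mulVec v, vecMul_transpose]
  rw [← natCard_stabilizer d (hd 0)]
  refine natCard_of_fibers (fun X : Isom (diagonal d) =>
    (⟨X.1 *ᵥ Pi.single 0 1, by rw [← hQ, hX, he]⟩ :
      {x : Fin (n + 1) → F // ∑ i, d i * x i ^ 2 = d 0})) _ ?_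
  rintro ⟨x, hx⟩
  obtain ⟨g, hg, hgx⟩ := exists_isom_mulVec h2 (isSymm_diagonal d) (x := x)
    (y := Pi.single 0 1) (by rw [hQ, hx, he]) (by rw [he]; exact hd 0)
  have hgu : IsUnit g.det := isUnit_det_of_conj (A' := diagonal d)
    (by rw [det_diagonal]; exact (Finset.prod_ne_zero_iff.2 fun i _ => hd i).isUnit) hg
  have hgi : g⁻¹ᵀ * diagonal d * g⁻¹ = diagonal d := by
    have hgg : g * g⁻¹ = 1 := Matrix.mul_nonsing_inv _ hgu
    calc _ = (g * g⁻¹)ᵀ * diagonal d * (g * g⁻¹) := by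
          rw [transpose_mul]
          conv_lhs => rw [← hg]
          simp only [Matrix.mul_assoc]
      _ = _ := by rw [hgg]; simp
  have hmul : ∀ {g X : Matrix (Fin (n + 1)) (Fin (n + 1)) F}, gᵀ * diagonal d * g = diagonal d →
      Xᵀ * diagonal d * X = diagonal d → (g * X)ᵀ * diagonal d * (g * X) = diagonal d := by
    intro g X h1 h2
    calc _ = Xᵀ * (gᵀ * diagonal d * g) * X := by simp only [transpose_mul, Matrix.mul_assoc]
      _ = _ := by rw [h1, h2]
  refine Nat.card_congr ⟨fun X => ⟨⟨g⁻¹ * X.1.1, hmul hgi X.1.2⟩, ?_⟩,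
    fun Y => ⟨⟨g * Y.1.1, hmul hg Y.1.2⟩, ?_⟩, ?_, ?_⟩
  · have h3 : X.1.1 *ᵥ Pi.single 0 1 = x := congrArg Subtype.val X.2
    rw [← mulVec_mulVec, h3, ← hgx, mulVec_mulVec, Matrix.nonsing_inv_mul _ hgu, one_mulVec]
  · ext1
    change (g * Y.1.1) *ᵥ Pi.single 0 1 = x
    rw [← mulVec_mulVec, Y.2, hgx]
  · intro X; ext1; ext1; exact Matrix.mul_nonsing_inv_cancel_left _ _ hgu
  · intro X; ext1; ext1; exact Matrix.nonsing_inv_mul_cancel_left _ _ hgu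

/-- The factor `C`: the density of a unimodular form of rank `n` over a residue field with `q` elements; `ε` is
the quadratic character of its signed discriminant, which matters only for even `n`. -/
def unimodularDensity (q : ℝ) (n : ℕ) (ε : ℝ) : ℝ :=
  if Even n then
    (∏ i ∈ Finset.range (n / 2), (1 - q ^ (-(2 * (i : ℤ) + 2)))) *
      (1 + ε * q ^ (-((n / 2 : ℕ) : ℤ)))⁻¹
  else ∏ i ∈ Finset.range ((n - 1) / 2), (1 - q ^ (-(2 * (i : ℤ) + 2)))

theorem natCard_isom_diagonal [Fintype F] [DecidableEq F] (hF : ringChar F ≠ 2) {n : ℕ}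
    (d : Fin n → F) (hd : ∀ i, d i ≠ 0) :
    (Nat.card (Isom (diagonal d)) : ℝ) = (Fintype.card F : ℝ) ^ (n.choose 2) *
      (2 * unimodularDensity (Fintype.card F) n
        (quadraticChar F ((-1) ^ (n / 2) * ∏ i, d i) : ℤ)) := by
  have h2 : (2 : F) ≠ 0 := Ring.two_ne_zero hF
  have hq1 : (1 : ℝ) < Fintype.card F := by exact_mod_cast Fintype.one_lt_card
  have hq0 : (Fintype.card F : ℝ) ≠ 0 := by positivity
  induction n with
  | zero =>
    have : Nat.card (Isom (diagonal d)) = 1 := by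
      have : Unique (Isom (diagonal d)) := ⟨⟨⟨1, by simp⟩⟩, fun X => Subsingleton.elim _ _⟩
      exact Nat.card_unique
    rw [this]
    norm_num [unimodularDensity]
  | succ n ih =>
    rw [natCard_isom_diagonal_succ h2 d hd]
    push_cast
    rw [ih _ fun i => hd _]
    have hchoose : (n + 1).choose 2 = n + n.choose 2 := by
      rw [Nat.choose_succ_succ', Nat.choose_one_right]
    rw [hchoose, pow_add]
    obtain ⟨m, rfl | rfl⟩ := Nat.even_or_odd' n
    · have hN := (sphereCard_formula hF m).2 d hd (d 0)
      have hε : quadraticChar F ((-1) ^ m * d 0 * ∏ i, d i) =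
          quadraticChar F ((-1) ^ m * ∏ i : Fin (2 * m), d i.succ) := by
        rw [Fin.prod_univ_succ, show (-1) ^ m * d 0 * (d 0 * ∏ i : Fin (2 * m), d i.succ) =
          ((-1) ^ m * ∏ i : Fin (2 * m), d i.succ) * d 0 ^ 2 by ring, map_mul,
          quadraticChar_sq_one' (hd 0), mul_one]
      rw [hε] at hN
      have hne : (-1) ^ m * ∏ i : Fin (2 * m), d i.succ ≠ 0 :=
        mul_ne_zero (pow_ne_zero _ (by simp)) (Finset.prod_ne_zero_iff.2 fun i _ => hd _)
      have hm : 2 * m / 2 = m := by omega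
      have hpos : 1 + ((quadraticChar F ((-1) ^ m * ∏ i : Fin (2 * m), d i.succ) : ℤ) : ℝ) *
          ((Fintype.card F : ℝ) ^ m)⁻¹ ≠ 0 := by
        rcases m.eq_zero_or_pos with rfl | hm0
        · simp
        have hlt : ((Fintype.card F : ℝ) ^ m)⁻¹ < 1 := inv_lt_one_of_one_lt₀
          (one_lt_pow₀ hq1 hm0.ne')
        have hgt : 0 < ((Fintype.card F : ℝ) ^ m)⁻¹ := by positivity
        rcases quadraticChar_dichotomy hne with h | h <;> rw [h] <;> push_cast <;> linarith
      have hN' : (sphereCard d (d 0) : ℝ) = (Fintype.card F : ℝ) ^ (2 * m) +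
        (quadraticChar F ((-1) ^ m * ∏ i : Fin (2 * m), d i.succ) : ℤ) *
          (Fintype.card F : ℝ) ^ m := by exact_mod_cast hN
      rw [hN', unimodularDensity, unimodularDensity, if_pos (even_two_mul m),
        if_neg (by simp), hm, show (2 * m + 1 - 1) / 2 = m by omega, _root_.zpow_neg, zpow_natCast]
      set e : ℝ := ((quadraticChar F ((-1) ^ m * ∏ i : Fin (2 * m), d i.succ) : ℤ) : ℝ)
      have key : ((Fintype.card F : ℝ) ^ (2 * m) + e * (Fintype.card F : ℝ) ^ m) *
          (1 + e * ((Fintype.card F : ℝ) ^ m)⁻¹)⁻¹ = (Fintype.card F : ℝ) ^ (2 * m) := by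
        rw [mul_inv_eq_iff_eq_mul₀ hpos, two_mul, pow_add]
        field_simp
      calc _ = (((Fintype.card F : ℝ) ^ (2 * m) + e * (Fintype.card F : ℝ) ^ m) *
          (1 + e * ((Fintype.card F : ℝ) ^ m)⁻¹)⁻¹) * ((Fintype.card F : ℝ) ^ ((2 * m).choose 2) *
            (2 * ∏ i ∈ Finset.range m, (1 - (Fintype.card F : ℝ) ^ (-(2 * (i : ℤ) + 2))))) := by ring
        _ = _ := by rw [key]; ring
    · have hN := (sphereCard_formula hF (m + 1)).1 d hd (d 0)
      rw [if_neg (hd 0), mul_zero, zero_sub] at hN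
      have hne : (-1) ^ (m + 1) * ∏ i, d i ≠ 0 :=
        mul_ne_zero (pow_ne_zero _ (by simp)) (Finset.prod_ne_zero_iff.2 fun i _ => hd _)
      have hm : (2 * m + 1 + 1) / 2 = m + 1 := by omega
      rw [hm, unimodularDensity, unimodularDensity, if_neg (by simp),
        if_pos (by exact ⟨m + 1, by ring⟩), hm, show (2 * m + 1 - 1) / 2 = m by omega,
        Finset.prod_range_succ]
      have hN' : (Fintype.card F : ℝ) * (sphereCard d (d 0) : ℝ) =
        (Fintype.card F : ℝ) ^ (2 * (m + 1)) +
        (quadraticChar F ((-1) ^ (m + 1) * ∏ i, d i) : ℤ) *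
          (Fintype.card F : ℝ) ^ (m + 1) * (-1) := by exact_mod_cast hN
      have hsq : ((quadraticChar F ((-1) ^ (m + 1) * ∏ i, d i) : ℤ) : ℝ) ^ 2 = 1 := by
        exact_mod_cast quadraticChar_sq_one hne
      have hpos : 1 + ((quadraticChar F ((-1) ^ (m + 1) * ∏ i, d i) : ℤ) : ℝ) *
          ((Fintype.card F : ℝ) ^ (m + 1))⁻¹ ≠ 0 := by
        have hlt : ((Fintype.card F : ℝ) ^ (m + 1))⁻¹ < 1 := inv_lt_one_of_one_lt₀
          (one_lt_pow₀ hq1 (by omega))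
        have hgt : 0 < ((Fintype.card F : ℝ) ^ (m + 1))⁻¹ := by positivity
        rcases quadraticChar_dichotomy hne with h | h <;> rw [h] <;> push_cast <;> linarith
      set e : ℝ := ((quadraticChar F ((-1) ^ (m + 1) * ∏ i, d i) : ℤ) : ℝ)
      have hz1 : (Fintype.card F : ℝ) ^ (-(2 * (m : ℤ) + 2)) =
          (((Fintype.card F : ℝ) ^ (m + 1))⁻¹) ^ 2 := by
        rw [inv_pow, ← pow_mul, _root_.zpow_neg, ← zpow_natCast]; congr 2; push_cast; ring
      rw [hz1, _root_.zpow_neg, zpow_natCast]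
      have hz2 : (sphereCard d (d 0) : ℝ) = (Fintype.card F : ℝ) ^ (2 * m + 1) *
          (1 - e * ((Fintype.card F : ℝ) ^ (m + 1))⁻¹) := by
        apply mul_left_cancel₀ hq0
        rw [hN']
        have : (Fintype.card F : ℝ) * ((Fintype.card F : ℝ) ^ (2 * m + 1)) =
          (Fintype.card F : ℝ) ^ (m + 1) * (Fintype.card F : ℝ) ^ (m + 1) := by ring
        rw [← mul_assoc, this]
        field_simp
        ring
      have key : (1 - (((Fintype.card F : ℝ) ^ (m + 1))⁻¹) ^ 2) *
          (1 + e * ((Fintype.card F : ℝ) ^ (m + 1))⁻¹)⁻¹ =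
            1 - e * ((Fintype.card F : ℝ) ^ (m + 1))⁻¹ := by
        rw [mul_inv_eq_iff_eq_mul₀ hpos]
        linear_combination (((Fintype.card F : ℝ) ^ (m + 1))⁻¹) ^ 2 * hsq
      rw [mul_assoc (∏ i ∈ Finset.range m, _), key, hz2]
      ring

theorem exists_diagonal (h2 : (2 : F) ≠ 0) {n : ℕ} (A : Matrix (Fin n) (Fin n) F)
    (hA : A.IsSymm) : ∃ (P : Matrix (Fin n) (Fin n) F) (d : Fin n → F),
      IsUnit P.det ∧ Pᵀ * A * P = diagonal d := by
  have : Invertible (2 : F) := invertibleOfNonzero h2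
  have hfr : Module.finrank F (Fin n → F) = n := by simp
  obtain ⟨v, hv⟩ := LinearMap.BilinForm.exists_orthogonal_basis (B := Matrix.toBilin' A)
    (V := Fin n → F) (by
      constructor
      intro x y
      simp only [RingHom.id_apply, Matrix.toBilin'_apply']
      rw [dotProduct_mulVec, ← mulVec_transpose, hA.eq, dotProduct_comm])
  let w := v.reindex (finCongr hfr)
  have hw : ∀ i j, i ≠ j → w i ⬝ᵥ A *ᵥ w j = 0 := by
    intro i j hij
    have := hv (i := (finCongr hfr).symm i) (j := (finCongr hfr).symm j)
      (by simpa using hij)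
    rw [← Matrix.toBilin'_apply']
    simpa [w] using this
  refine ⟨(Pi.basisFun F (Fin n)).toMatrix w, fun i => w i ⬝ᵥ A *ᵥ w i, ?_, ?_⟩
  · rw [← Module.Basis.det_apply]
    exact (Module.Basis.is_basis_iff_det _).1 ⟨w.linearIndependent, w.span_eq⟩
  · ext i j
    have : ((Pi.basisFun F (Fin n)).toMatrix w)ᵀ * A * (Pi.basisFun F (Fin n)).toMatrix w =
        Matrix.of fun i j => w i ⬝ᵥ A *ᵥ w j := by
      ext i j
      rw [Matrix.mul_assoc, Matrix.mul_apply]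
      simp [dotProduct, mulVec, Matrix.mul_apply, Module.Basis.toMatrix_apply]
    rw [this, Matrix.diagonal_apply]
    split_ifs with h
    · rw [h]; rfl
    · exact hw i j h

/-- The order of the orthogonal group of a nondegenerate symmetric matrix over a finite field of
odd characteristic. -/
theorem natCard_isom_field [Fintype F] [DecidableEq F] (hF : ringChar F ≠ 2) {n : ℕ}
    (A : Matrix (Fin n) (Fin n) F) (hA : A.IsSymm) (hAu : A.det ≠ 0) :
    (Nat.card (Isom A) : ℝ) = (Fintype.card F : ℝ) ^ (n.choose 2) *
      (2 * unimodularDensity (Fintype.card F) n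
        (quadraticChar F ((-1) ^ (n / 2) * A.det) : ℤ)) := by
  obtain ⟨P, d, hP, hPA⟩ := exists_diagonal (Ring.two_ne_zero hF) A hA
  have hdet : ∏ i, d i = A.det * P.det ^ 2 := by
    rw [← det_diagonal, ← hPA]; simp; ring
  have hd : ∀ i, d i ≠ 0 := by
    have : ∏ i, d i ≠ 0 := by rw [hdet]; exact mul_ne_zero hAu (pow_ne_zero _ hP.ne_zero)
    exact fun i => Finset.prod_ne_zero_iff.1 this i (Finset.mem_univ i)
  have h1 := natCard_isom_diagonal hF d hd
  rw [hdet, ← mul_assoc ((-1) ^ (n / 2)), map_mul, quadraticChar_sq_one' hP.ne_zero, mul_one] at h1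
  rw [← h1]
  congr 1
  have hPP : P * P⁻¹ = 1 := Matrix.mul_nonsing_inv _ hP
  have hPT : P⁻¹ᵀ * Pᵀ = 1 := by rw [← transpose_mul, hPP, transpose_one]
  have hA' : A = P⁻¹ᵀ * diagonal d * P⁻¹ := by
    rw [← hPA]
    calc A = (P⁻¹ᵀ * Pᵀ) * A * (P * P⁻¹) := by rw [hPT, hPP, Matrix.one_mul, Matrix.mul_one]
      _ = _ := by simp only [Matrix.mul_assoc]
  have hPT' : Pᵀ * P⁻¹ᵀ = 1 := by
    rw [← transpose_mul, Matrix.nonsing_inv_mul _ hP, transpose_one]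
  refine Nat.card_congr ⟨fun X => ⟨P⁻¹ * X.1 * P, ?_⟩, fun Y => ⟨P * Y.1 * P⁻¹, ?_⟩, ?_, ?_⟩
  · calc _ = Pᵀ * (X.1ᵀ * (P⁻¹ᵀ * diagonal d * P⁻¹) * X.1) * P := by
          simp only [transpose_mul, Matrix.mul_assoc]
      _ = _ := by rw [← hA', X.2, hPA]
  · calc _ = P⁻¹ᵀ * (Y.1ᵀ * (Pᵀ * A * P) * Y.1) * P⁻¹ := by
          simp only [transpose_mul, Matrix.mul_assoc]
      _ = _ := by rw [hPA, Y.2, ← hA']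
  · intro X; ext1
    simp only [Matrix.mul_assoc, hPP, Matrix.mul_one]
    exact Matrix.mul_nonsing_inv_cancel_left _ _ hP
  · intro Y; ext1
    simp only [Matrix.mul_assoc, Matrix.nonsing_inv_mul _ hP, Matrix.mul_one]
    exact Matrix.nonsing_inv_mul_cancel_left _ _ hP
end orthogonal
/-! ### Lifting solutions along a surjection of rings -/

lemma natCard_symm {n α : Type*} [Fintype n] [Finite α] :
    Nat.card {Z : Matrix n n α // Z.IsSymm} = Nat.card α ^ ((Fintype.card n + 1).choose 2) := by
  have e : {Z : Matrix n n α // Z.IsSymm} ≃ (Sym2 n → α) :=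
    (Equiv.subtypeEquivRight (fun Z => by
      constructor
      · intro h i j
        exact h.apply j i
      · intro h
        ext i j
        exact h j i)).trans
      (Sym2.lift (α := n) (β := α))
  rw [Nat.card_congr e, Nat.card_fun, Nat.card_eq_fintype_card (α := Sym2 n), Sym2.card]

lemma natCard_ker_matrix {n R S : Type*} [Fintype n] [CommRing R] [CommRing S] [Finite R]
    (π : R →+* S) (Y : Matrix n n R) :
    Nat.card {X : Matrix n n R // X.map π = Y.map π} =
      Nat.card {x : R // π x = 0} ^ (Fintype.card n * Fintype.card n) := by
  rw [← natCard_matrix]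
  exact Nat.card_congr
    { toFun := fun X => Matrix.of fun i j => ⟨X.1 i j - Y i j, by
        have := congrFun (congrFun X.2 i) j
        simp only [Matrix.map_apply] at this
        rw [map_sub, this, sub_self]⟩
      invFun := fun K => ⟨Matrix.of fun i j => (K i j).1 + Y i j, by
        ext i j
        simp [(K i j).2]⟩
      left_inv := fun X => by ext; simp
      right_inv := fun K => by ext; simp }

lemma choose_two_identity (n : ℕ) : n * n = (n + 1).choose 2 + n.choose 2 := by
  rw [Nat.choose_succ_succ' n 1, Nat.choose_one_right]
  induction n with
  | zero => rfl
  | succ n ih => rw [Nat.choose_succ_succ' n 1, Nat.choose_one_right]; lia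

/-- If every symmetric perturbation of `A` with entries in the kernel of `π` is congruent to `A`,
then the isometries of `A` and those of its reduction are related by a power of the size of the
kernel: each perturbation is `A[X] - A` for equally many matrices `X`. -/
lemma natCard_isom_lift {n R S : Type*} [Fintype n] [DecidableEq n] [CommRing R] [CommRing S]
    [Finite R] [Finite S] (π : R →+* S) (hπ : Function.Surjective π) (A : Matrix n n R)
    (hA : A.IsSymm)
    (hlift : ∀ Z : Matrix n n R, Z.IsSymm → (∀ i j, π (Z i j) = 0) →
      ∃ W : Matrix n n R, IsUnit W.det ∧ Wᵀ * A * W = A + Z) :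
    Nat.card (Isom A) =
      Nat.card {x : R // π x = 0} ^ ((Fintype.card n).choose 2) * Nat.card (Isom (A.map π)) := by
  have hq : 0 < Nat.card {x : R // π x = 0} :=
    Nat.card_pos_iff.2 ⟨⟨⟨0, map_zero π⟩⟩, inferInstance⟩
  have hmap : ∀ X : Matrix n n R, (Xᵀ * A * X).map π = (X.map π)ᵀ * A.map π * X.map π := by
    intro X
    rw [Matrix.map_mul, Matrix.map_mul, Matrix.transpose_map]
  -- Solutions of the congruence modulo the kernel, counted in two ways.
  let T := {X : Matrix n n R // (Xᵀ * A * X).map π = A.map π}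
  have h1 : Nat.card T = Nat.card (Isom (A.map π)) *
      Nat.card {x : R // π x = 0} ^ (Fintype.card n * Fintype.card n) := by
    refine natCard_of_fibers (fun X : T => (⟨X.1.map π, by rw [← hmap]; exact X.2⟩ :
      Isom (A.map π))) _ ?_
    rintro ⟨Y, hY⟩
    obtain ⟨Y, rfl⟩ : ∃ Y' : Matrix n n R, Y'.map π = Y :=
      ⟨Matrix.of fun i j => Function.surjInv hπ (Y i j), by
        ext i j; simp [Function.surjInv_eq hπ]⟩
    rw [← natCard_ker_matrix π Y]
    exact Nat.card_congr
      { toFun := fun X => ⟨X.1.1, congrArg Subtype.val X.2⟩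
        invFun := fun X => ⟨⟨X.1, by rw [hmap, X.2]; exact hY⟩, Subtype.ext X.2⟩
        left_inv := fun X => rfl
        right_inv := fun X => rfl }
  have h2 : Nat.card T = Nat.card {Z : Matrix n n {x : R // π x = 0} // Z.IsSymm} *
      Nat.card (Isom A) := by
    refine natCard_of_fibers (fun X : T => (⟨Matrix.of fun i j =>
        ⟨(X.1ᵀ * A * X.1) i j - A i j, by
          have := congrFun (congrFun X.2 i) j
          simp only [Matrix.map_apply] at this
          rw [map_sub, this, sub_self]⟩, by
        have hs : (X.1ᵀ * A * X.1).IsSymm := by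
          simp [Matrix.IsSymm, Matrix.transpose_mul, hA.eq, Matrix.mul_assoc]
        ext i j
        simp [hs.apply i j, hA.apply i j]⟩ :
      {Z : Matrix n n {x : R // π x = 0} // Z.IsSymm})) _ ?_
    rintro ⟨Z, hZ⟩
    obtain ⟨W, hW, hWA⟩ := hlift (Z.map Subtype.val)
      (by ext i j; exact congrArg Subtype.val (hZ.apply i j)) (fun i j => (Z i j).2)
    have key : Nat.card (Isom A) =
        Nat.card {X : Matrix n n R // Xᵀ * A * X = A + Z.map Subtype.val} := by
      rw [← natCard_conj_right hW (fun X => Xᵀ * A * X = A + Z.map Subtype.val)]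
      refine Nat.card_congr (Equiv.subtypeEquivRight fun X => ?_)
      have e : (X * W)ᵀ * A * (X * W) = Wᵀ * (Xᵀ * A * X) * W := by
        simp only [Matrix.transpose_mul, Matrix.mul_assoc]
      rw [e, ← hWA]
      constructor
      · intro h; rw [h]
      · intro h
        have hWu : IsUnit W := (Matrix.isUnit_iff_isUnit_det W).2 hW
        have hWt : IsUnit Wᵀ := (Matrix.isUnit_iff_isUnit_det _).2 (by rwa [Matrix.det_transpose])
        exact hWt.mul_left_cancel (hWu.mul_right_cancel h)
    rw [key]
    have hker : ∀ X : Matrix n n R, Xᵀ * A * X = A + Z.map Subtype.val →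
        (Xᵀ * A * X).map π = A.map π := by
      intro X h
      rw [h]
      ext i j
      simp [(Z i j).2]
    exact Nat.card_congr
      { toFun := fun X => ⟨X.1.1, by
          ext i j
          have := congrArg Subtype.val (congrFun (congrFun (congrArg Subtype.val X.2) i) j)
          simp only [Matrix.of_apply] at this
          rw [Matrix.add_apply, Matrix.map_apply, ← this]
          ring⟩
        invFun := fun X => ⟨⟨X.1, hker X.1 X.2⟩, by
          refine Subtype.ext ?_
          ext i j
          simp [X.2]⟩
        left_inv := fun X => rfl
        right_inv := fun X => rfl }
  rw [natCard_symm, h1, choose_two_identity (Fintype.card n), pow_add] at h2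
  have := Nat.eq_of_mul_eq_mul_left (pow_pos hq ((Fintype.card n + 1).choose 2))
    (show _ * (Nat.card {x : R // π x = 0} ^ ((Fintype.card n).choose 2) *
      Nat.card (Isom (A.map π))) = _ * Nat.card (Isom A) by rw [← h2]; ring)
  exact this.symm

/-- If `det A` is a unit times `ϖ ^ d`, then `A + ϖ ^ a T` is congruent to `A` modulo
`ϖ ^ (a + 1)` for all `a > d`: one may take `W = 1 + (ϖ ^ a / 2) A⁻¹ T`, where `ϖ ^ a A⁻¹` is
replaced by a multiple of the adjugate of `A`. -/
lemma exists_conj_of_det {n R : Type*} [Fintype n] [DecidableEq n] [CommRing R]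
    (t : R) (ht : t * 2 = 1) (ϖ : R) (a d : ℕ) (had : d + 1 ≤ a) (hϖ : ϖ ^ (a + 1) = 0)
    (A : Matrix n n R) (hA : A.IsSymm) (u v : R) (huv : u * v = 1) (hdet : A.det = u * ϖ ^ d)
    (T : Matrix n n R) (hT : T.IsSymm) :
    ∃ W : Matrix n n R, IsUnit W.det ∧ Wᵀ * A * W = A + ϖ ^ a • T := by
  obtain ⟨b, rfl⟩ := Nat.exists_eq_add_of_le had
  have hadj : A.adjugateᵀ = A.adjugate := by rw [Matrix.adjugate_transpose, hA.eq]
  refine ⟨1 + (ϖ ^ (b + 1)) • ((t * v) • (A.adjugate * T)), isUnit_det_one_add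
    ⟨d + 1 + (b + 1), ?_⟩ _, ?_⟩
  · rw [← pow_mul]
    exact pow_eq_zero_of_le (by nlinarith) hϖ
  · have h1 : Tᵀ * A.adjugateᵀ * A = (u * ϖ ^ d) • T := by
      rw [hadj, hT.eq, Matrix.mul_assoc, Matrix.adjugate_mul, hdet]; simp
    have h2 : A * (A.adjugate * T) = (u * ϖ ^ d) • T := by
      rw [← Matrix.mul_assoc, Matrix.mul_adjugate, hdet]; simp
    rw [Matrix.transpose_add, Matrix.transpose_one, Matrix.transpose_smul, Matrix.transpose_smul,
      Matrix.transpose_mul, Matrix.add_mul, Matrix.one_mul, Matrix.mul_add, Matrix.mul_one,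
      Matrix.smul_mul, Matrix.smul_mul, h1, Matrix.mul_smul, Matrix.mul_smul, Matrix.add_mul, h2]
    simp only [Matrix.smul_mul, smul_smul, smul_add]
    have h3 : ϖ ^ (b + 1) * (t * v) * (u * ϖ ^ d) = t * ϖ ^ (d + 1 + b) := by
      linear_combination (ϖ ^ (b + 1) * t * ϖ ^ d) * huv
    have h4 : ϖ ^ (b + 1) * (t * v) * (ϖ ^ (b + 1) * (t * v * (u * ϖ ^ d))) = 0 := by
      have : ϖ ^ (b + 1) * (t * v) * (ϖ ^ (b + 1) * (t * v * (u * ϖ ^ d))) =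
        (t * v * t * v * u * ϖ ^ b) * ϖ ^ (d + 1 + b + 1) := by ring
      rw [this, hϖ, mul_zero]
    have h5 : ϖ ^ (b + 1) * (t * v) * (ϖ ^ (b + 1) * (t * v) * (u * ϖ ^ d)) = 0 := by
      rw [← h4]; ring
    have h6 : t * ϖ ^ (d + 1 + b) + t * ϖ ^ (d + 1 + b) = ϖ ^ (d + 1 + b) := by
      linear_combination (ϖ ^ (d + 1 + b)) * ht
    simp only [← mul_assoc] at h3 h5 ⊢
    rw [h3, h5, zero_smul, add_zero, add_assoc, ← add_smul, h6]

/-! ### Passing from `ℤ_p` to `ℤ / p ^ a` -/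

section Padic

variable {p : ℕ} [Fact p.Prime]

lemma toZModPow_surjective (a : ℕ) :
    Function.Surjective (PadicInt.toZModPow a : ℤ_[p] →+* ZMod (p ^ a)) :=
  ZMod.ringHom_surjective _

lemma isUnit_two (hp : p ≠ 2) : IsUnit (2 : ℤ_[p]) := by
  have h : IsUnit ((2 : ℕ) : ℤ_[p]) := by
    rw [PadicInt.isUnit_iff, PadicInt.norm_natCast_eq_one_iff]
    exact (Nat.coprime_primes Fact.out Nat.prime_two).2 hp
  exact_mod_cast h

lemma toZModPow_eq_zero_iff (a : ℕ) (x : ℤ_[p]) :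
    PadicInt.toZModPow a x = 0 ↔ (p : ℤ_[p]) ^ a ∣ x := by
  rw [← RingHom.mem_ker, PadicInt.ker_toZModPow, Ideal.mem_span_singleton]

/-- For odd `p` the evenness condition on the diagonal in the definition of the local density is
empty. -/
lemma Acount_eq (hp : p ≠ 2) {n : Type*} [Fintype n] [DecidableEq n] (A : Matrix n n ℤ_[p])
    (a : ℕ) : Acount p A A a = Nat.card (Isom (A.map (PadicInt.toZModPow a))) := by
  have hdens : ∀ Y : Matrix n n ℤ_[p], densCond p A A a Y ↔
      (Y.map (PadicInt.toZModPow a))ᵀ * A.map (PadicInt.toZModPow a) *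
        Y.map (PadicInt.toZModPow a) = A.map (PadicInt.toZModPow a) := by
    intro Y
    have h1 : densCond p A A a Y ↔ ∀ i j, (p : ℤ_[p]) ^ a ∣ (Yᵀ * A * Y - A) i j := by
      refine forall_congr' fun i => forall_congr' fun j => ?_
      split_ifs
      · rw [(isUnit_two hp).mul_right_dvd]
      · rw [mul_one]
    rw [h1, ← Matrix.transpose_map, ← Matrix.map_mul, ← Matrix.map_mul, ← Matrix.ext_iff]
    refine forall_congr' fun i => forall_congr' fun j => ?_
    rw [← toZModPow_eq_zero_iff, Matrix.sub_apply, map_sub, sub_eq_zero]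
    rfl
  refine Nat.card_congr (Equiv.subtypeEquivRight fun X => ?_)
  constructor
  · rintro ⟨Y, rfl, h⟩
    exact (hdens Y).1 h
  · intro h
    have hY : (Matrix.of fun i j => Function.surjInv (toZModPow_surjective a) (X i j) :
        Matrix n n ℤ_[p]).map (PadicInt.toZModPow a) = X := by
      ext i j; simp [Function.surjInv_eq (toZModPow_surjective a)]
    exact ⟨_, hY, (hdens _).2 (by rwa [hY])⟩

lemma castHom_eq_zero_iff (a : ℕ) (x : ZMod (p ^ (a + 1))) :
    ZMod.castHom (pow_dvd_pow p a.le_succ) (ZMod (p ^ a)) x = 0 ↔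
      ∃ y : ZMod (p ^ (a + 1)), x = (p : ZMod (p ^ (a + 1))) ^ a * y := by
  constructor
  · intro h
    have hx : ((x.val : ℕ) : ZMod (p ^ (a + 1))) = x := ZMod.natCast_zmod_val x
    rw [← hx, map_natCast, ZMod.natCast_eq_zero_iff] at h
    obtain ⟨c, hc⟩ := h
    exact ⟨c, by rw [← hx, hc]; push_cast; rfl⟩
  · rintro ⟨y, rfl⟩
    have : ((p : ZMod (p ^ a))) ^ a = 0 := by
      rw [← Nat.cast_pow, ZMod.natCast_self]
    rw [map_mul, map_pow, map_natCast, this, zero_mul]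

lemma natCard_ker_castHom (a : ℕ) :
    Nat.card {x : ZMod (p ^ (a + 1)) //
      ZMod.castHom (pow_dvd_pow p a.le_succ) (ZMod (p ^ a)) x = 0} = p := by
  have hp : 0 < p := (Fact.out : p.Prime).pos
  have hs := ZMod.castHom_surjective (pow_dvd_pow p a.le_succ)
  have h := natCard_of_fibers (ZMod.castHom (pow_dvd_pow p a.le_succ) (ZMod (p ^ a)))
    (Nat.card {x : ZMod (p ^ (a + 1)) //
      ZMod.castHom (pow_dvd_pow p a.le_succ) (ZMod (p ^ a)) x = 0}) (by
      intro b
      obtain ⟨y, rfl⟩ := hs b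
      refine Nat.card_congr ((Equiv.subRight y).subtypeEquiv fun x => ?_)
      rw [Equiv.subRight_apply, map_sub, sub_eq_zero])
  rw [Nat.card_zmod, Nat.card_zmod] at h
  exact (Nat.eq_of_mul_eq_mul_left (pow_pos hp a) ((pow_succ p a).symm.trans h)).symm

/-- The solution counts grow by the factor `p ^ (m(m-1)/2)` as soon as `a` exceeds the valuation of
the determinant. -/
lemma natCard_isom_succ (hp : p ≠ 2) {n : Type*} [Fintype n] [DecidableEq n]
    (A : Matrix n n ℤ_[p]) (hA : A.IsSymm) (hd : A.det ≠ 0) (a : ℕ)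
    (ha : A.det.valuation + 1 ≤ a) :
    Nat.card (Isom (A.map (PadicInt.toZModPow (a + 1)))) =
      p ^ ((Fintype.card n).choose 2) * Nat.card (Isom (A.map (PadicInt.toZModPow a))) := by
  have hcomp : (A.map (PadicInt.toZModPow (a + 1))).map
      (ZMod.castHom (pow_dvd_pow p a.le_succ) (ZMod (p ^ a))) = A.map (PadicInt.toZModPow a) := by
    ext i j
    exact PadicInt.cast_toZModPow a (a + 1) a.le_succ (A i j)
  rw [natCard_isom_lift (ZMod.castHom (pow_dvd_pow p a.le_succ) (ZMod (p ^ a)))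
    (ZMod.castHom_surjective _) (A.map (PadicInt.toZModPow (a + 1))) (hA.map _) ?_,
    natCard_ker_castHom, hcomp]
  intro Z hZ hZ0
  choose! f hf using fun x => (castHom_eq_zero_iff (p := p) a x).1
  obtain ⟨t, ht⟩ := (isUnit_two hp).exists_left_inv
  set φ : ℤ_[p] →+* ZMod (p ^ (a + 1)) := PadicInt.toZModPow (a + 1)
  have hT : (Z.map f).IsSymm := hZ.map f
  obtain ⟨W, hW, hWA⟩ := exists_conj_of_det (φ t)
    (by rw [← map_ofNat φ 2, ← map_mul, ht, map_one]) (p : ZMod (p ^ (a + 1))) a A.det.valuation ha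
    (by rw [← Nat.cast_pow, ZMod.natCast_self]) (A.map φ) (hA.map _)
    (φ (PadicInt.unitCoeff hd : ℤ_[p])) (φ ((PadicInt.unitCoeff hd)⁻¹ : ℤ_[p]ˣ))
    (by rw [← map_mul, Units.mul_inv, map_one])
    (by
      have := congrArg φ (PadicInt.unitCoeff_spec hd)
      rw [RingHom.map_det] at this
      rw [← RingHom.mapMatrix_apply, this, map_mul, map_pow, map_natCast])
    (Z.map f) hT
  refine ⟨W, hW, ?_⟩
  rw [hWA]
  congr 1
  ext i j
  simpa using (hf _ (hZ0 i j)).symm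

lemma natCard_isom_unimodular (hp : p ≠ 2) {n : Type*} [Fintype n] [DecidableEq n]
    (A : Matrix n n ℤ_[p]) (hA : A.IsSymm) (hd : IsUnit A.det) (a : ℕ) :
    Nat.card (Isom (A.map (PadicInt.toZModPow (a + 1)))) =
      p ^ (a * (Fintype.card n).choose 2) * Nat.card (Isom (A.map (PadicInt.toZModPow 1))) := by
  induction a with
  | zero => simp
  | succ a ih =>
    have hv : A.det.valuation = 0 := by
      have h := PadicInt.norm_eq_zpow_neg_valuation hd.ne_zero
      rw [PadicInt.isUnit_iff.1 hd, eq_comm, zpow_eq_one_iff_right₀ (by positivity)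
        (by exact_mod_cast (Fact.out : p.Prime).one_lt.ne')] at h
      lia
    rw [natCard_isom_succ hp A hA hd.ne_zero (a + 1) (by lia), ih, ← mul_assoc, ← pow_add]
    congr 2
    ring

/-- By Hensel's lemma, a unit is a square in `ℚ_p` if and only if it is a square modulo `p`. The
residue field is written `ZMod (p ^ 1)` to match the target of `PadicInt.toZModPow 1`. -/
lemma chiOdd_eq (hp : p ≠ 2) [Fact (p ^ 1).Prime] (u : ℤ_[p]) (hu : IsUnit u) :
    chiOdd p u = quadraticChar (ZMod (p ^ 1)) (PadicInt.toZModPow 1 u) := by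
  set φ : ℤ_[p] →+* ZMod (p ^ 1) := PadicInt.toZModPow 1
  have hsq : IsSquare (u : ℚ_[p]) ↔ IsSquare (φ u) := by
    constructor
    · rintro ⟨x, hx⟩
      have hn : ‖x‖ ≤ 1 := by
        have h1 : ‖x‖ * ‖x‖ ≤ 1 := by
          rw [← norm_mul, ← hx]; exact u.2
        nlinarith [norm_nonneg x]
      obtain ⟨y, rfl⟩ : ∃ y : ℤ_[p], (y : ℚ_[p]) = x := ⟨⟨x, hn⟩, rfl⟩
      exact ⟨φ y, by rw [← map_mul, show u = y * y from Subtype.ext hx]⟩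
    · rintro ⟨y, hy⟩
      obtain ⟨x, rfl⟩ := toZModPow_surjective 1 y
      have hx1 : ‖x‖ = 1 := by
        rw [← PadicInt.isUnit_iff]
        have hxx : IsUnit (φ x) := isUnit_of_mul_isUnit_left (hy ▸ hu.map φ)
        by_contra hx
        rw [PadicInt.not_isUnit_iff, PadicInt.norm_lt_one_iff_dvd] at hx
        rw [(toZModPow_eq_zero_iff 1 x).2 (by simpa using hx)] at hxx
        exact not_isUnit_zero hxx
      have h2 : ‖(2 : ℤ_[p])‖ = 1 := PadicInt.isUnit_iff.1 (isUnit_two hp)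
      have hF : ‖x ^ 2 - u‖ < 1 := by
        rw [PadicInt.norm_lt_one_iff_dvd]
        have := (toZModPow_eq_zero_iff 1 (x ^ 2 - u)).1 (by
          rw [map_sub, map_pow, sub_eq_zero, sq]; exact hy.symm)
        simpa using this
      obtain ⟨z, hz, -⟩ := hensels_lemma (p := p) (F := Polynomial.X ^ 2 - Polynomial.C u) (a := x)
        (by simpa [h2, hx1, Polynomial.derivative_pow] using hF)
      refine ⟨(z : ℚ_[p]), ?_⟩
      have hz' : z ^ 2 = u := by
        simpa [sub_eq_zero] using hz
      rw [← hz', sq]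
      push_cast
      rfl
  have hne : φ u ≠ 0 := (hu.map φ).ne_zero
  rw [quadraticChar_apply, quadraticCharFun, if_neg hne]
  simp only [chiOdd, hsq, hu, if_true]

end Padic
/-! ### Local densities -/

section Density

variable {p : ℕ} [Fact p.Prime]

/-- The number of solutions of `A[X] ≡ A` modulo `p ^ a`, divided by its expected order of
growth `p ^ (a * m(m-1)/2)`. For odd `p` and nondegenerate symmetric `A` its eventual value is twice
the local density of `A`. -/
def normCount {n : Type*} [Fintype n] (A : Matrix n n ℤ_[p]) (a : ℕ) : ℝ :=
  (Nat.card (Isom (A.map (PadicInt.toZModPow a))) : ℝ) /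
    ((p : ℝ) ^ (Fintype.card n).choose 2) ^ a

lemma density_exponent (m : ℕ) :
    -((m : ℤ) * m) + ((m : ℤ) * (m + 1)) / 2 = -((m.choose 2 : ℕ) : ℤ) := by
  have h1 : ((m : ℤ) * (m + 1)) / 2 = ((m + 1).choose 2 : ℕ) := by
    rw [Nat.choose_two_right, Nat.add_sub_cancel]
    push_cast
    rw [mul_comm]
  have h2 := choose_two_identity m
  zify at h2
  rw [h1]
  linarith

lemma locDens_eq (hp : p ≠ 2) {n : Type*} [Fintype n] [DecidableEq n] (A : Matrix n n ℤ_[p])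
    (c : ℝ) (hc : ∀ᶠ a in atTop, normCount A a = c) : locDens p A = 2⁻¹ * c := by
  refine Tendsto.limUnder_eq (Tendsto.congr' ?_ tendsto_const_nhds)
  filter_upwards [hc] with a ha
  rw [← ha, Acount_eq hp, density_exponent, if_pos rfl, normCount, mul_neg,
    _root_.zpow_neg (p : ℝ), mul_comm (a : ℤ), _root_.zpow_mul]
  simp only [zpow_natCast, Int.reduceNeg, _root_.zpow_neg, zpow_one]
  ring

lemma normCount_eventually_const (hp : p ≠ 2) {n : Type*} [Fintype n] [DecidableEq n]
    (A : Matrix n n ℤ_[p]) (hA : A.IsSymm) (hd : A.det ≠ 0) :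
    ∃ c, ∀ᶠ a in atTop, normCount A a = c := by
  have hp0 : (p : ℝ) ≠ 0 := Nat.cast_ne_zero.2 (Fact.out : p.Prime).ne_zero
  refine ⟨normCount A (A.det.valuation + 1), ?_⟩
  filter_upwards [eventually_ge_atTop (A.det.valuation + 1)] with a ha
  induction a, ha using Nat.le_induction with
  | base => rfl
  | succ a ha ih =>
    rw [← ih, normCount, normCount, natCard_isom_succ hp A hA hd a ha, pow_succ]
    push_cast
    field_simp

lemma normCount_unimodular (hp : p ≠ 2) (n : ℕ) (U : Matrix (Fin n) (Fin n) ℤ_[p])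
    (hU : U.IsSymm) (hUu : IsUnit U.det) (a : ℕ) (ha : 1 ≤ a) :
    normCount U a = 2 * unimodularDensity p n (chiOdd p ((-1) ^ (n / 2) * U.det)) := by
  have hpp : p.Prime := Fact.out
  have hp0 : (p : ℝ) ≠ 0 := Nat.cast_ne_zero.2 hpp.ne_zero
  have : Fact (p ^ 1).Prime := ⟨by rwa [pow_one]⟩
  obtain ⟨b, rfl⟩ := Nat.exists_eq_add_of_le' ha
  set φ : ℤ_[p] →+* ZMod (p ^ 1) := PadicInt.toZModPow 1 with hφ
  have hdet : (U.map φ).det = φ U.det := by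
    rw [RingHom.map_det, RingHom.mapMatrix_apply]
  have hfield := natCard_isom_field (F := ZMod (p ^ 1))
    (by rw [ZMod.ringChar_zmod_n, pow_one]; exact hp) (U.map φ) (hU.map _)
    (by rw [hdet]; exact (hUu.map φ).ne_zero)
  have hunit : IsUnit ((-1) ^ (n / 2) * U.det) := (isUnit_one.neg.pow _).mul hUu
  have hchi : quadraticChar (ZMod (p ^ 1)) ((-1) ^ (n / 2) * (U.map φ).det) =
      chiOdd p ((-1) ^ (n / 2) * U.det) := by
    rw [chiOdd_eq hp _ hunit, hdet, ← hφ, map_mul φ, map_pow φ, map_neg φ, map_one φ]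
  rw [hchi, ZMod.card, Nat.cast_pow, pow_one (p : ℝ)] at hfield
  rw [normCount, natCard_isom_unimodular hp U hU hUu b, Nat.cast_mul, hfield, Fintype.card_fin,
    pow_succ, ← pow_mul]
  push_cast
  rw [mul_comm b]
  field_simp

lemma normCount_block (hp : p ≠ 2) {k n : ℕ} (B : Matrix (Fin k) (Fin k) ℤ_[p])
    (U : Matrix (Fin n) (Fin n) ℤ_[p]) (hB : B.IsSymm) (hU : U.IsSymm) (hUu : IsUnit U.det)
    (a : ℕ) :
    normCount (fromBlocks ((p : ℤ_[p]) • B) 0 0 U) a =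
      normCount U a * normCount ((p : ℤ_[p]) • B) a := by
  have hp0 : (p : ℝ) ≠ 0 := Nat.cast_ne_zero.2 (Fact.out : p.Prime).ne_zero
  set φ : ℤ_[p] →+* ZMod (p ^ a) := PadicInt.toZModPow a with hφ
  have hB' : ((p : ℤ_[p]) • B).map φ = (p : ZMod (p ^ a)) • B.map φ := by
    ext i j; simp
  obtain ⟨t, ht⟩ := (isUnit_two hp).exists_left_inv
  have h := natCard_block (φ t) (by rw [← map_ofNat φ 2, ← map_mul, ht, map_one])
    (ϖ := (p : ZMod (p ^ a))) ⟨a, by rw [← Nat.cast_pow, ZMod.natCast_self]⟩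
    (B := B.map φ) (U := U.map φ) (hB.map _) (hU.map _)
    (by rw [← RingHom.mapMatrix_apply, ← RingHom.map_det]; exact hUu.map φ)
  have hch : (k + n).choose 2 = k.choose 2 + n.choose 2 + k * n := by
    rw [Nat.add_choose_eq, Finset.Nat.sum_antidiagonal_eq_sum_range_succ_mk]
    simp [Finset.sum_range_succ]
    ring
  rw [normCount, normCount, normCount, fromBlocks_map, ← hφ, hB',
    Matrix.map_zero _ (map_zero φ), Matrix.map_zero _ (map_zero φ), h]
  simp only [Fintype.card_sum, Fintype.card_fin, Nat.card_zmod, hch, pow_add]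
  push_cast
  rw [mul_pow, mul_pow, ← pow_mul, ← pow_mul _ (k * n), mul_comm a]
  field_simp

end Density

end KM

/-- for odd `p`,
`α_p(pB₁ ⊥ U₁) = 2^{r(n₀)} α_p(pB₁) · C` with `C` as in Lemma 4.1.3 (2). -/
theorem statement12 (p : ℕ) [Fact p.Prime] (hp : p ≠ 2) (n₀ k : ℕ) (hn₀ : 1 ≤ n₀)
    (U₁ : Matrix (Fin n₀) (Fin n₀) ℤ_[p]) (hUs : U₁.IsSymm) (hUu : IsUnit U₁.det)
    (B₁ : Matrix (Fin k) (Fin k) ℤ_[p]) (hB₁s : B₁.IsSymm) (hB₁d : B₁.det ≠ 0) :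
    let lhs : ℝ := KM.locDens p (Matrix.fromBlocks ((p : ℤ_[p]) • B₁) 0 0 U₁)
    let base : ℝ := (2 : ℝ) ^ (if k = 0 then (0 : ℕ) else 1) *
      (if k = 0 then (1 : ℝ) else KM.locDens p ((p : ℤ_[p]) • B₁))
    (Even n₀ →
      lhs = base *
        ((∏ i ∈ Finset.range (n₀ / 2), (1 - (p : ℝ) ^ (-(2 * (i : ℤ) + 2)))) *
          (1 + (KM.chiOdd p ((-1) ^ (n₀ / 2) * U₁.det) : ℝ) *
            (p : ℝ) ^ (-((n₀ / 2 : ℕ) : ℤ)))⁻¹)) ∧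
    (¬ Even n₀ →
      lhs = base *
        ∏ i ∈ Finset.range ((n₀ - 1) / 2), (1 - (p : ℝ) ^ (-(2 * (i : ℤ) + 2)))) := by
  intro lhs base
  suffices h : lhs = base *
      KM.unimodularDensity p n₀ (KM.chiOdd p ((-1) ^ (n₀ / 2) * U₁.det)) by
    refine ⟨fun he => ?_, fun he => ?_⟩
    · rw [h, KM.unimodularDensity, if_pos he]
    · rw [h, KM.unimodularDensity, if_neg he]
  set C := KM.unimodularDensity p n₀ (KM.chiOdd p ((-1) ^ (n₀ / 2) * U₁.det)) with hC
  have hpB : ((p : ℤ_[p]) • B₁).det ≠ 0 := by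
    rw [Matrix.det_smul]
    exact mul_ne_zero (pow_ne_zero _ (Nat.cast_ne_zero.2 (Fact.out : p.Prime).ne_zero)) hB₁d
  obtain ⟨c, hc⟩ := KM.normCount_eventually_const hp _ (hB₁s.smul (p : ℤ_[p])) hpB
  have hlhs : lhs = 2⁻¹ * (2 * C * c) := by
    refine KM.locDens_eq hp _ _ ?_
    filter_upwards [hc, eventually_ge_atTop 1] with a ha ha1
    rw [KM.normCount_block hp B₁ U₁ hB₁s hUs hUu, ha, KM.normCount_unimodular hp _ _ hUs hUu a ha1]
  rw [hlhs]
  by_cases hk : k = 0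
  · -- There is exactly one `0 × 0` matrix, so here the count is `1` for every `a`.
    subst hk
    obtain ⟨a, ha⟩ := hc.exists
    have hc1 : c = 1 := by
      rw [← ha, KM.normCount]
      have : Nat.card (KM.Isom (((p : ℤ_[p]) • B₁).map (PadicInt.toZModPow a))) = 1 :=
        Nat.card_eq_one_iff_unique.2 ⟨inferInstance, ⟨⟨0, Subsingleton.elim _ _⟩⟩⟩
      rw [this]
      simp
    simp [base, hc1]
  · have hb : base = 2 * KM.locDens p ((p : ℤ_[p]) • B₁) := by simp [base, hk]
    rw [hb, KM.locDens_eq hp _ c hc]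
    ring
end
end

section
/- Let m ≥ 1, B ∈ S_m(ℤ_2)^×, r a nonnegative integer, and d ∈ ℤ_2^* a unit. Then α_2(2^r d B) = 2^{r m(m+1)/2} α_2(B). -/
/-!
The condition `(2 ^ r d B)[Y] ≡ 2 ^ r d B` modulo `2 ^ (a + r) S_e` is the condition `B[Y] ≡ B`
modulo `2 ^ a S_e`, which for `a ≥ 1` depends only on `Y` modulo `2 ^ a`. Hence
`#A_{a+r}(2 ^ r d B) = 2 ^ (r m²) #A_a(B)` (`KM.Acount_smul`), so the sequence defining the density
of `2 ^ r d B`, shifted by `r`, is `2 ^ (r m(m+1)/2)` times the one defining the density of `B`.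

The density is defined through `limUnder`, so the existence of the limit has to be proved as well.
For `a` large, every matrix in `B + 2 ^ a S_e` is congruent modulo `2 ^ (a+1) S_e` to some `B[U]`
with `U` invertible (`KM.exists_conj`). Since `Y ↦ Y U` carries the solutions of `B[Y] ≡ B` to those
of `B[Y] ≡ B[U]`, each of the `2 ^ (m(m+1)/2)` classes of `B + 2 ^ a S_e` modulo `2 ^ (a+1) S_e`
is hit equally often, and `2 ^ (m(m+1)/2) #A_{a+1}(B) = 2 ^ (m²) #A_a(B)` (`KM.Acount_succ`): the
sequence defining the density is eventually constant.
-/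

open Matrix Filter

open scoped Classical

noncomputable section

namespace KM

/-! ### Counting residue matrices -/

/-- A surjection of finite additive groups has equal fibres. -/
lemma card_preimage_mul {G H : Type*} [AddCommGroup G] [AddCommGroup H] (f : G →+ H)
    (hf : Function.Surjective f) (P : H → Prop) :
    Nat.card {x : G // P (f x)} = Nat.card {y : H // P y} * Nat.card f.ker := by
  obtain ⟨s, hs⟩ := hf.hasRightInverse
  rw [← Nat.card_prod]
  refine Nat.card_congr
    { toFun := fun x => (⟨f x.1, x.2⟩, ⟨x.1 - s (f x.1), by simp [AddMonoidHom.mem_ker, hs _]⟩)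
      invFun := fun y => ⟨y.2.1 + s y.1.1, by
        have h := y.2.2
        rw [AddMonoidHom.mem_ker] at h
        rw [map_add, h, hs, zero_add]
        exact y.1.2⟩
      left_inv := fun x => by simp
      right_inv := ?_ }
  rintro ⟨⟨y, hy⟩, ⟨k, hk⟩⟩
  rw [AddMonoidHom.mem_ker] at hk
  simp [hk, hs y]

/-- `Y` and `Y'` have the same reduction modulo `2 ^ a` iff they differ by `2 ^ a • Z`. -/
lemma map_eq_iff {m : ℕ} (a : ℕ) (Y Y' : Matrix (Fin m) (Fin m) ℤ_[2]) :
    Y.map (PadicInt.toZModPow a) = Y'.map (PadicInt.toZModPow a) ↔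
      ∃ Z : Matrix (Fin m) (Fin m) ℤ_[2], Y = Y' + (2 : ℤ_[2]) ^ a • Z := by
  have key : ∀ x y : ℤ_[2], PadicInt.toZModPow a x = PadicInt.toZModPow a y ↔
      (2 : ℤ_[2]) ^ a ∣ x - y := by
    intro x y
    rw [← sub_eq_zero, ← map_sub, ← RingHom.mem_ker, PadicInt.ker_toZModPow,
      Ideal.mem_span_singleton]
    norm_num
  constructor
  · intro h
    have h' : ∀ i j, ∃ z : ℤ_[2], Y i j - Y' i j = 2 ^ a * z := fun i j =>
      (key _ _).1 (by simpa using congrFun (congrFun h i) j)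
    choose Z hZ using h'
    refine ⟨Matrix.of Z, ?_⟩
    ext i j : 2
    simp [← hZ]
  · rintro ⟨Z, rfl⟩
    ext i j : 2
    simp only [Matrix.map_apply]
    rw [key]
    exact ⟨Z i j, by simp⟩

lemma exists_lift {m : ℕ} (a : ℕ) (X : Matrix (Fin m) (Fin m) (ZMod (2 ^ a))) :
    ∃ Y : Matrix (Fin m) (Fin m) ℤ_[2], Y.map (PadicInt.toZModPow a) = X := by
  choose f hf using ZMod.ringHom_surjective (PadicInt.toZModPow (p := 2) a)
  exact ⟨X.map f, by ext i j; simp [hf]⟩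

/-- If membership in a set of 2-adic matrices depends only on residues modulo `2 ^ a`, then
passing from level `a` to level `a + r` multiplies the number of residues by `2 ^ (r * m ^ 2)`. -/
lemma card_lift {m : ℕ} (a r : ℕ) (P : Matrix (Fin m) (Fin m) ℤ_[2] → Prop)
    (hP : ∀ Y Z, P Y → P (Y + (2 : ℤ_[2]) ^ a • Z)) :
    Nat.card {X : Matrix (Fin m) (Fin m) (ZMod (2 ^ (a + r))) //
      ∃ Y : Matrix (Fin m) (Fin m) ℤ_[2], Y.map (PadicInt.toZModPow (a + r)) = X ∧ P Y} =
    2 ^ (r * (m * m)) * Nat.card {X : Matrix (Fin m) (Fin m) (ZMod (2 ^ a)) //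
      ∃ Y : Matrix (Fin m) (Fin m) ℤ_[2], Y.map (PadicInt.toZModPow a) = X ∧ P Y} := by
  have hdvd : 2 ^ a ∣ 2 ^ (a + r) := pow_dvd_pow 2 (Nat.le_add_right a r)
  let f : Matrix (Fin m) (Fin m) (ZMod (2 ^ (a + r))) →+ Matrix (Fin m) (Fin m) (ZMod (2 ^ a)) :=
    ((ZMod.castHom hdvd (ZMod (2 ^ a))).mapMatrix).toAddMonoidHom
  have hfY : ∀ Y : Matrix (Fin m) (Fin m) ℤ_[2],
      f (Y.map (PadicInt.toZModPow (a + r))) = Y.map (PadicInt.toZModPow a) := by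
    intro Y
    ext i j
    simp only [f, RingHom.toAddMonoidHom_eq_coe, AddMonoidHom.coe_coe, RingHom.mapMatrix_apply,
      Matrix.map_apply, ZMod.castHom_apply]
    exact PadicInt.cast_toZModPow a (a + r) (Nat.le_add_right a r) (Y i j)
  have hf : Function.Surjective f := fun X => by
    obtain ⟨Y, rfl⟩ := exists_lift a X
    exact ⟨_, hfY Y⟩
  have h1 := card_preimage_mul f hf
    (fun X => ∃ Y : Matrix (Fin m) (Fin m) ℤ_[2], Y.map (PadicInt.toZModPow a) = X ∧ P Y)
  have h2 := card_preimage_mul f hf (fun _ => True)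
  have hk : Nat.card f.ker = 2 ^ (r * (m * m)) := by
    have hc : ∀ b : ℕ, Nat.card (Matrix (Fin m) (Fin m) (ZMod (2 ^ b))) = 2 ^ (b * m * m) := by
      intro b
      change Nat.card (Fin m → Fin m → ZMod (2 ^ b)) = _
      rw [Nat.card_fun, Nat.card_fun, Nat.card_zmod, Nat.card_fin, ← pow_mul, ← pow_mul, mul_assoc]
    rw [Nat.card_congr (Equiv.subtypeUnivEquiv (fun _ => trivial)),
      Nat.card_congr (Equiv.subtypeUnivEquiv (fun _ => trivial)), hc, hc] at h2
    have h3 : 2 ^ ((a + r) * m * m) = 2 ^ (a * m * m) * 2 ^ (r * (m * m)) := by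
      rw [← pow_add]; ring_nf
    rw [h3] at h2
    exact (Nat.eq_of_mul_eq_mul_left (by positivity) h2).symm
  rw [← hk, mul_comm, ← h1]
  refine Nat.card_congr (Equiv.subtypeEquivRight fun X => ?_)
  obtain ⟨Y₀, rfl⟩ := exists_lift (a + r) X
  rw [hfY]
  constructor
  · rintro ⟨Y, hY, hPY⟩
    exact ⟨Y, by rw [← hfY, hY, hfY], hPY⟩
  · rintro ⟨Y, hY, hPY⟩
    obtain ⟨Z, rfl⟩ := (map_eq_iff a Y₀ Y).1 hY.symm
    exact ⟨_, rfl, hP _ _ hPY⟩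

/-! ### Even symmetric matrices -/

/-- Even symmetric matrices are exactly those of the form `V + Vᵀ`. This is what makes the
lattice of even symmetric matrices visibly stable under `S ↦ Uᵀ * S * U`. -/
lemma even_iff {m : ℕ} (a : ℕ) (M : Matrix (Fin m) (Fin m) ℤ_[2]) (hM : M.IsSymm) :
    (∀ i j, (((2 : ℕ) : ℤ_[2]) ^ a * (if i = j then 2 else 1)) ∣ M i j) ↔
      ∃ V : Matrix (Fin m) (Fin m) ℤ_[2], M = (2 : ℤ_[2]) ^ a • (V + Vᵀ) := by
  constructor
  · intro h
    choose T hT using h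
    refine ⟨Matrix.of fun i j => if i ≤ j then T i j else 0, ?_⟩
    ext i j : 2
    rcases lt_trichotomy i j with hij | rfl | hij
    · have := hT i j
      rw [if_neg hij.ne] at this
      simp [this, hij.le, hij.not_ge]
    · have := hT i i
      rw [if_pos rfl] at this
      simp [this]
      ring
    · have := hT j i
      rw [if_neg hij.ne, hM.apply] at this
      simp [this, hij.le, hij.not_ge]
  · rintro ⟨V, rfl⟩ i j
    split_ifs with hij
    · subst hij
      exact ⟨V i i, by simp; ring⟩
    · exact ⟨V i j + V j i, by simp⟩

lemma conj_isSymm {m : ℕ} {B : Matrix (Fin m) (Fin m) ℤ_[2]} (hB : B.IsSymm)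
    (Y : Matrix (Fin m) (Fin m) ℤ_[2]) : (Yᵀ * B * Y).IsSymm := by
  simp [Matrix.IsSymm, Matrix.transpose_mul, hB.eq, Matrix.mul_assoc]

lemma densCond_iff {m : ℕ} {B C : Matrix (Fin m) (Fin m) ℤ_[2]} (hB : B.IsSymm) (hC : C.IsSymm)
    (a : ℕ) (Y : Matrix (Fin m) (Fin m) ℤ_[2]) :
    densCond 2 B C a Y ↔
      ∃ V : Matrix (Fin m) (Fin m) ℤ_[2], Yᵀ * B * Y - C = (2 : ℤ_[2]) ^ a • (V + Vᵀ) :=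
  even_iff a _ ((conj_isSymm hB Y).sub hC)

/-- For `a ≥ 1` the congruence `B[Y] ≡ C mod 2 ^ a S_e` depends only on `Y` modulo `2 ^ a`. The
diagonal of the quadratic term is only divisible by `2 ^ (2 * a)`, whence the condition on `a`. -/
lemma densCond_add {m : ℕ} {B C : Matrix (Fin m) (Fin m) ℤ_[2]} (hB : B.IsSymm) (hC : C.IsSymm)
    {a : ℕ} (ha : 1 ≤ a) (Y Z : Matrix (Fin m) (Fin m) ℤ_[2]) (h : densCond 2 B C a Y) :
    densCond 2 B C a (Y + (2 : ℤ_[2]) ^ a • Z) := by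
  have e : (Y + (2 : ℤ_[2]) ^ a • Z)ᵀ * B * (Y + (2 : ℤ_[2]) ^ a • Z) - C =
      (Yᵀ * B * Y - C) + (2 : ℤ_[2]) ^ a • (Yᵀ * B * Z + (Yᵀ * B * Z)ᵀ) +
        (2 : ℤ_[2]) ^ a • (2 : ℤ_[2]) ^ a • (Zᵀ * B * Z) := by
    simp only [Matrix.transpose_add, Matrix.transpose_smul, Matrix.add_mul, Matrix.mul_add,
      Matrix.smul_mul, Matrix.mul_smul, Matrix.transpose_mul, Matrix.transpose_transpose, hB.eq,
      Matrix.mul_assoc, smul_add]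
    abel
  rw [densCond_iff hB hC] at h ⊢
  obtain ⟨V, hV⟩ := h
  obtain ⟨b, rfl⟩ : ∃ b, a = b + 1 := ⟨a - 1, by omega⟩
  refine ⟨V + Yᵀ * B * Z + (2 : ℤ_[2]) ^ b • (Zᵀ * B * Z), ?_⟩
  have hs := (conj_isSymm hB Z).eq
  rw [e, hV, ← smul_add, ← smul_add]
  congr 1
  rw [Matrix.transpose_add, Matrix.transpose_add, Matrix.transpose_smul, hs, pow_succ, mul_smul,
    two_smul, smul_add]
  abel

lemma densCond_congr {m : ℕ} {B C : Matrix (Fin m) (Fin m) ℤ_[2]} (hB : B.IsSymm) (hC : C.IsSymm)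
    {a : ℕ} (ha : 1 ≤ a) {Y Y' : Matrix (Fin m) (Fin m) ℤ_[2]}
    (hYY : Y.map (PadicInt.toZModPow a) = Y'.map (PadicInt.toZModPow a))
    (h : densCond 2 B C a Y') : densCond 2 B C a Y := by
  obtain ⟨Z, rfl⟩ := (map_eq_iff a Y Y').1 hYY
  exact densCond_add hB hC ha _ _ h

/-- `B[Y] ≡ B mod 2 ^ a S_e` iff `(2 ^ r d B)[Y] ≡ 2 ^ r d B mod 2 ^ (a + r) S_e`. -/
lemma densCond_smul {m : ℕ} (B Y : Matrix (Fin m) (Fin m) ℤ_[2]) (a r : ℕ) (d : ℤ_[2])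
    (hd : IsUnit d) :
    densCond 2 (((2 : ℤ_[2]) ^ r * d) • B) (((2 : ℤ_[2]) ^ r * d) • B) (a + r) Y ↔
      densCond 2 B B a Y := by
  unfold densCond
  refine forall_congr' fun i => forall_congr' fun j => ?_
  have e : (Yᵀ * (((2 : ℤ_[2]) ^ r * d) • B) * Y - ((2 : ℤ_[2]) ^ r * d) • B) i j =
      (2 : ℤ_[2]) ^ r * (d * (Yᵀ * B * Y - B) i j) := by
    simp only [Matrix.mul_smul, Matrix.smul_mul, ← smul_sub, Matrix.smul_apply, smul_eq_mul]
    ring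
  rw [e, pow_add, mul_comm (_ ^ a) (_ ^ r), mul_assoc, Nat.cast_ofNat,
    mul_dvd_mul_iff_left (pow_ne_zero r two_ne_zero), hd.dvd_mul_left]

/-! ### Representatives of even symmetric matrices modulo two -/

/-- The upper triangular 0-1 matrix `V` attached to a function on unordered pairs; the matrices
`V + Vᵀ` represent the even symmetric matrices modulo twice the even symmetric matrices. -/
def triRep {m : ℕ} (c : Sym2 (Fin m) → ZMod 2) : Matrix (Fin m) (Fin m) ℤ_[2] :=
  Matrix.of fun i j => if i ≤ j then ((c s(i, j)).val : ℤ_[2]) else 0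

lemma toZMod_eq_iff (x : ℤ_[2]) (c : ZMod 2) :
    PadicInt.toZMod x = c ↔ (2 : ℤ_[2]) ∣ x - (c.val : ℤ_[2]) := by
  have h : PadicInt.toZMod (p := 2) ((c.val : ℕ) : ℤ_[2]) = c := by
    rw [map_natCast, ZMod.natCast_zmod_val]
  conv_lhs => rw [← h]
  rw [← sub_eq_zero, ← map_sub, ← RingHom.mem_ker, PadicInt.ker_toZMod,
    PadicInt.maximalIdeal_eq_span_p, Ideal.mem_span_singleton]
  norm_num

/-- Every even symmetric matrix is congruent to a unique `triRep c + (triRep c)ᵀ`. -/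
lemma triRep_existsUnique {m : ℕ} (V : Matrix (Fin m) (Fin m) ℤ_[2]) :
    ∃! c : Sym2 (Fin m) → ZMod 2, ∃ V' : Matrix (Fin m) (Fin m) ℤ_[2],
      (V + Vᵀ) - (triRep c + (triRep c)ᵀ) = (2 : ℤ_[2]) ^ 1 • (V' + V'ᵀ) := by
  have hsymm : ∀ c, ((V + Vᵀ) - (triRep c + (triRep c)ᵀ)).IsSymm := fun c => by
    simp [Matrix.IsSymm, add_comm]
  let T : Fin m → Fin m → ℤ_[2] := fun i j => if i = j then V i i else V i j + V j i
  have hT : ∀ i j, T i j = T j i := fun i j => by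
    by_cases h : i = j
    · rw [h]
    · simp [T, h, Ne.symm h, add_comm]
  have key : ∀ c : Sym2 (Fin m) → ZMod 2, (∃ V' : Matrix (Fin m) (Fin m) ℤ_[2],
      (V + Vᵀ) - (triRep c + (triRep c)ᵀ) = (2 : ℤ_[2]) ^ 1 • (V' + V'ᵀ)) ↔
      ∀ i j, c s(i, j) = PadicInt.toZMod (T i j) := by
    intro c
    rw [← even_iff 1 _ (hsymm c)]
    refine forall_congr' fun i => forall_congr' fun j => ?_
    rw [@eq_comm _ (c s(i, j)), toZMod_eq_iff, pow_one, Nat.cast_ofNat]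
    rcases lt_trichotomy i j with hij | rfl | hij
    · simp [triRep, T, hij.ne, hij.le, hij.not_ge]
    · have : ((V + Vᵀ) - (triRep c + (triRep c)ᵀ)) i i =
          2 * (T i i - ((c s(i, i)).val : ℤ_[2])) := by
        simp [triRep, T]; ring
      rw [this, if_pos rfl, mul_dvd_mul_iff_left two_ne_zero]
    · simp [triRep, T, hij.ne', hij.le, hij.not_ge, Sym2.eq_swap (a := j) (b := i)]
  refine ⟨Sym2.lift ⟨fun i j => PadicInt.toZMod (T i j), fun i j => congrArg _ (hT i j)⟩,
    (key _).2 fun i j => rfl, fun c hc => ?_⟩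
  funext s
  induction s with
  | _ i j => exact (key c).1 hc i j

/-! ### Stabilisation of the solution counts -/

/-- For `a` large, `B + 2 ^ a • (V + Vᵀ)` is congruent modulo `2 ^ (a + 1) S_e` to `B[U]` with
`U` invertible: solve the linearised equation, `U = 1 + 2 ^ a • B⁻¹ * V`. The denominators of
`B⁻¹` are bounded by the valuation of `det B`. -/
lemma exists_conj_s13 {m : ℕ} {B : Matrix (Fin m) (Fin m) ℤ_[2]} (hB : B.IsSymm) (hBd : B.det ≠ 0)
    {a : ℕ} (ha : B.det.valuation + 2 ≤ a) (V : Matrix (Fin m) (Fin m) ℤ_[2]) :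
    ∃ U : Matrix (Fin m) (Fin m) ℤ_[2], IsUnit U ∧ ∃ V' : Matrix (Fin m) (Fin m) ℤ_[2],
      Uᵀ * B * U = B + (2 : ℤ_[2]) ^ a • (V + Vᵀ) + (2 : ℤ_[2]) ^ (a + 1) • (V' + V'ᵀ) := by
  obtain ⟨k, hk⟩ := Nat.exists_eq_add_of_le ha
  have hu := PadicInt.unitCoeff_spec hBd
  set u := PadicInt.unitCoeff hBd
  -- `W₀ = 2 ^ (a - 2) • B⁻¹ * V` is integral
  let W₀ : Matrix (Fin m) (Fin m) ℤ_[2] :=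
    ((2 : ℤ_[2]) ^ k * ((u⁻¹ : ℤ_[2]ˣ) : ℤ_[2])) • (B.adjugate * V)
  have hW₀ : B * (4 : ℤ_[2]) • W₀ = (2 : ℤ_[2]) ^ a • V := by
    simp only [W₀, Matrix.mul_smul, ← Matrix.mul_assoc, Matrix.mul_adjugate, smul_smul,
      Matrix.smul_mul, Matrix.one_mul]
    congr 1
    rw [hu, hk]
    push_cast
    calc _ = (u * ((u⁻¹ : ℤ_[2]ˣ) : ℤ_[2])) * (2 ^ B.det.valuation * 4 * 2 ^ k) := by ring
      _ = _ := by rw [Units.mul_inv]; ring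
  set W := (4 : ℤ_[2]) • W₀ with hW
  have hW₀' : Wᵀ * B = (2 : ℤ_[2]) ^ a • Vᵀ := by
    have := congrArg Matrix.transpose hW₀
    simpa [hB.eq] using this
  refine ⟨1 + W, ?_, W₀ᵀ * V, ?_⟩
  · rw [Matrix.isUnit_iff_isUnit_det]
    -- modulo two, `1 + W` is the identity
    have h1 : PadicInt.toZMod (1 + W).det = (1 : ZMod 2) := by
      rw [RingHom.map_det]
      convert Matrix.det_one (n := Fin m) (R := ZMod 2)
      ext i j
      have h4 : PadicInt.toZMod (p := 2) 4 = 0 := by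
        rw [map_ofNat]; rfl
      simp [hW, h4, Matrix.one_apply, apply_ite]
    by_contra hne
    have : (1 + W).det ∈ RingHom.ker (PadicInt.toZMod (p := 2)) := by
      rw [PadicInt.ker_toZMod]
      exact hne
    rw [RingHom.mem_ker, h1] at this
    exact one_ne_zero this
  · have e : (1 + W)ᵀ * B * (1 + W) = B + B * W + Wᵀ * B + Wᵀ * B * W := by
      simp only [Matrix.transpose_add, Matrix.transpose_one, Matrix.add_mul, Matrix.mul_add,
        Matrix.one_mul, Matrix.mul_one]
      abel
    -- the quadratic term `Wᵀ * B * W` is symmetric and equals `4 • 2 ^ a • W₀ᵀ * V`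
    have h2 : Wᵀ * B * W = (2 : ℤ_[2]) ^ (a + 1) • (2 : ℤ_[2]) • (W₀ᵀ * V) := by
      rw [Matrix.mul_assoc, hW₀, hW, Matrix.transpose_smul, Matrix.smul_mul, Matrix.mul_smul,
        smul_smul, smul_smul]
      congr 1
      ring
    have h3 : (W₀ᵀ * V)ᵀ = W₀ᵀ * V := by
      have h4 := (conj_isSymm hB W).eq
      rw [h2, smul_smul, Matrix.transpose_smul] at h4
      exact smul_right_injective _ (mul_ne_zero (pow_ne_zero _ two_ne_zero) two_ne_zero) h4
    rw [e, h2, hW₀, hW₀', h3, ← two_smul ℤ_[2] (W₀ᵀ * V), smul_add]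
    abel

/-- Translating by `U` identifies the solutions of `B[Y] ≡ B` with those of `B[Y] ≡ C`, when
`B[U] ≡ C`. -/
lemma densCond_mul_iff {m : ℕ} {B C U V' : Matrix (Fin m) (Fin m) ℤ_[2]} (hB : B.IsSymm)
    (hC : C.IsSymm) (hU : IsUnit U) {a : ℕ}
    (hUC : Uᵀ * B * U = C + (2 : ℤ_[2]) ^ a • (V' + V'ᵀ)) (Y : Matrix (Fin m) (Fin m) ℤ_[2]) :
    densCond 2 B C a (Y * U) ↔ densCond 2 B B a Y := by
  rw [densCond_iff hB hC, densCond_iff hB hB]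
  have e : (Y * U)ᵀ * B * (Y * U) - C =
      Uᵀ * (Yᵀ * B * Y - B) * U + (2 : ℤ_[2]) ^ a • (V' + V'ᵀ) := by
    have : Uᵀ * (Yᵀ * B * Y - B) * U = (Y * U)ᵀ * B * (Y * U) - Uᵀ * B * U := by
      simp only [Matrix.mul_sub, Matrix.sub_mul, Matrix.transpose_mul, Matrix.mul_assoc]
    rw [this, hUC]
    abel
  rw [e]
  constructor
  · rintro ⟨V, hV⟩
    obtain ⟨u, rfl⟩ := hU
    set I : Matrix (Fin m) (Fin m) ℤ_[2] := ↑u⁻¹ with hI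
    have hr : (u : Matrix (Fin m) (Fin m) ℤ_[2]) * I = 1 := u.mul_inv
    have hl : Iᵀ * (u : Matrix (Fin m) (Fin m) ℤ_[2])ᵀ = 1 := by
      rw [← Matrix.transpose_mul, hr, Matrix.transpose_one]
    refine ⟨Iᵀ * (V - V') * I, ?_⟩
    have h1 := congrArg (fun M => Iᵀ * M * I) (eq_sub_of_add_eq hV)
    have h2 : ∀ M : Matrix (Fin m) (Fin m) ℤ_[2],
        Iᵀ * ((u : Matrix (Fin m) (Fin m) ℤ_[2])ᵀ * M * (u : Matrix (Fin m) (Fin m) ℤ_[2])) * I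
          = M := by
      intro M
      calc _ = (Iᵀ * (u : Matrix (Fin m) (Fin m) ℤ_[2])ᵀ) * M *
            ((u : Matrix (Fin m) (Fin m) ℤ_[2]) * I) := by simp only [Matrix.mul_assoc]
        _ = M := by rw [hl, hr, Matrix.one_mul, Matrix.mul_one]
    simp only [h2] at h1
    rw [h1, ← smul_sub, Matrix.mul_smul, Matrix.smul_mul]
    congr 1
    simp only [Matrix.transpose_mul, Matrix.transpose_sub, Matrix.transpose_transpose,
      Matrix.mul_add, Matrix.mul_sub, Matrix.add_mul, Matrix.sub_mul, Matrix.mul_assoc]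
    abel
  · rintro ⟨V, hV⟩
    refine ⟨Uᵀ * V * U + V', ?_⟩
    rw [hV, Matrix.mul_smul, Matrix.smul_mul, ← smul_add]
    congr 1
    simp only [Matrix.transpose_mul, Matrix.transpose_add, Matrix.transpose_transpose,
      Matrix.mul_add, Matrix.add_mul, Matrix.mul_assoc]
    abel

/-- The recursion behind the existence of the local density. The solutions of `B[Y] ≡ B` modulo
`2 ^ a S_e`, counted modulo `2 ^ (a + 1)`, are split according to the class of `B[Y]` modulo
`2 ^ (a + 1) S_e`; translation by the matrices of `exists_conj` shows that all
`2 ^ (m * (m + 1) / 2)` parts have the same size. -/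
lemma Acount_succ {m : ℕ} {B : Matrix (Fin m) (Fin m) ℤ_[2]} (hB : B.IsSymm) (hBd : B.det ≠ 0)
    {a : ℕ} (ha : B.det.valuation + 2 ≤ a) :
    2 ^ (m * (m + 1) / 2) * Acount 2 B B (a + 1) = 2 ^ (m * m) * Acount 2 B B a := by
  have hlift := card_lift a 1 (densCond 2 B B a)
    (fun Y Z h => densCond_add hB hB (by omega) Y Z h)
  rw [one_mul] at hlift
  unfold Acount
  rw [← hlift]
  choose U hU V' hUV using fun c : Sym2 (Fin m) → ZMod 2 => exists_conj_s13 hB hBd ha (triRep c)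
  let C : (Sym2 (Fin m) → ZMod 2) → Matrix (Fin m) (Fin m) ℤ_[2] :=
    fun c => B + (2 : ℤ_[2]) ^ a • (triRep c + (triRep c)ᵀ)
  have hC : ∀ c, (C c).IsSymm := fun c => by
    simp [C, Matrix.IsSymm, hB.eq, add_comm]
  have htrans : ∀ c Y, densCond 2 B (C c) (a + 1) (Y * U c) ↔ densCond 2 B B (a + 1) Y :=
    fun c Y => densCond_mul_iff hB (hC c) (hU c) (hUV c) Y
  -- each solution at level `a` belongs to exactly one class at level `a + 1`
  have hclass : ∀ Y V, Yᵀ * B * Y - B = (2 : ℤ_[2]) ^ a • (V + Vᵀ) → ∀ c,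
      (densCond 2 B (C c) (a + 1) Y ↔ ∃ V'' : Matrix (Fin m) (Fin m) ℤ_[2],
        (V + Vᵀ) - (triRep c + (triRep c)ᵀ) = (2 : ℤ_[2]) ^ 1 • (V'' + V''ᵀ)) := by
    intro Y V hV c
    rw [densCond_iff hB (hC c)]
    refine exists_congr fun V'' => ?_
    have : Yᵀ * B * Y - C c = (2 : ℤ_[2]) ^ a • ((V + Vᵀ) - (triRep c + (triRep c)ᵀ)) := by
      rw [smul_sub, ← hV]
      simp only [C]
      abel
    rw [this, pow_add, mul_smul]
    exact (smul_right_injective _ (pow_ne_zero a two_ne_zero)).eq_iff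
  have hdown : ∀ c Y, densCond 2 B (C c) (a + 1) Y → densCond 2 B B a Y := by
    intro c Y h
    obtain ⟨V, hV⟩ := (densCond_iff hB (hC c) _ _).1 h
    refine (densCond_iff hB hB _ _).2 ⟨triRep c + (2 : ℤ_[2]) • V, ?_⟩
    have : Yᵀ * B * Y - B = (Yᵀ * B * Y - C c) + (2 : ℤ_[2]) ^ a • (triRep c + (triRep c)ᵀ) := by
      simp only [C]; abel
    rw [this, hV, pow_succ, mul_smul, ← smul_add]
    congr 1
    rw [Matrix.transpose_add, Matrix.transpose_smul, smul_add]
    abel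
  have hcard : Nat.card (Sym2 (Fin m) → ZMod 2) = 2 ^ (m * (m + 1) / 2) := by
    rw [Nat.card_fun, Nat.card_zmod, Nat.card_eq_fintype_card, Sym2.card, Fintype.card_fin,
      Nat.choose_two_right, Nat.add_sub_cancel, mul_comm]
  rw [← hcard, ← Nat.card_prod]
  let ρ : Matrix (Fin m) (Fin m) ℤ_[2] →+* Matrix (Fin m) (Fin m) (ZMod (2 ^ (a + 1))) :=
    (PadicInt.toZModPow (a + 1)).mapMatrix
  have hρ : ∀ Y, Y.map (PadicInt.toZModPow (a + 1)) = ρ Y := fun Y => rfl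
  refine Nat.card_congr (Equiv.ofBijective (fun x => ⟨x.2.1 * ρ (U x.1), ?_⟩) ⟨?_, ?_⟩)
  · obtain ⟨Y, hY, hd⟩ := x.2.2
    exact ⟨Y * U x.1, by rw [hρ, map_mul, ← hρ Y, hY],
      hdown x.1 _ ((htrans _ _).2 hd)⟩
  · rintro ⟨c, _, Y, rfl, hd⟩ ⟨c', _, Y', rfl, hd'⟩ h
    have h : ρ Y * ρ (U c) = ρ Y' * ρ (U c') := congrArg Subtype.val h
    have hcc : c = c' := by
      have h1 := (htrans c Y).2 hd
      have h2 := densCond_congr hB (hC c') (by omega) (Y := Y * U c)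
        (by rw [hρ, hρ, map_mul, map_mul, h]) ((htrans c' Y').2 hd')
      obtain ⟨V, hV⟩ := (densCond_iff hB hB _ _).1 (hdown _ _ h1)
      exact (triRep_existsUnique V).unique ((hclass _ V hV c).1 h1) ((hclass _ V hV c').1 h2)
    subst hcc
    have : ρ Y = ρ Y' := ((hU c).map ρ).mul_right_cancel h
    simp only [hρ, this]
  · rintro ⟨_, Y, rfl, hd⟩
    obtain ⟨V, hV⟩ := (densCond_iff hB hB _ _).1 hd
    obtain ⟨c, hc, -⟩ := triRep_existsUnique V
    have h1 := (hclass _ V hV c).2 hc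
    obtain ⟨u, hu⟩ := hU c
    have hY : Y = (Y * (↑u⁻¹ : Matrix (Fin m) (Fin m) ℤ_[2])) * U c := by
      rw [← hu, mul_assoc, Units.inv_mul, mul_one]
    rw [hY, htrans] at h1
    refine ⟨(c, ⟨_, _, rfl, h1⟩), Subtype.ext ?_⟩
    change ρ _ * ρ (U c) = ρ Y
    rw [← map_mul, ← hY]

/-- The scaled matrix has `2 ^ (r * m ^ 2)` times as many solutions, at a level raised by `r`. -/
lemma Acount_smul {m : ℕ} {B : Matrix (Fin m) (Fin m) ℤ_[2]} (hB : B.IsSymm)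
    {a : ℕ} (ha : 1 ≤ a) (r : ℕ) (d : ℤ_[2]) (hd : IsUnit d) :
    Acount 2 (((2 : ℤ_[2]) ^ r * d) • B) (((2 : ℤ_[2]) ^ r * d) • B) (a + r) =
      2 ^ (r * (m * m)) * Acount 2 B B a := by
  unfold Acount
  simp only [densCond_smul _ _ _ _ _ hd]
  exact card_lift a r _ (fun Y Z h => densCond_add hB hB ha Y Z h)

end KM

/-- `α_2(2^r d B) = 2^{r m(m+1)/2} α_2(B)`. -/
theorem statement13 (m : ℕ) (hm : 1 ≤ m)
    (B : Matrix (Fin m) (Fin m) ℤ_[2]) (hBs : B.IsSymm) (hBd : B.det ≠ 0)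
    (r : ℕ) (d : ℤ_[2]) (hd : IsUnit d) :
    KM.locDens 2 (((2 : ℤ_[2]) ^ r * d) • B) =
      (2 : ℝ) ^ (r * (m * (m + 1) / 2)) * KM.locDens 2 B := by
  unfold KM.locDens KM.locDensPair
  simp only [if_true, Fintype.card_fin, Nat.cast_ofNat]
  set h : ℕ := m * (m + 1) / 2 with hh
  have hhz : ((m : ℤ) * ((m : ℤ) + 1)) / 2 = (h : ℤ) := by
    rw [hh]; push_cast; rfl
  rw [hhz]
  set f : ℕ → ℝ := fun a => (2 : ℝ) ^ (-(1 : ℤ)) *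
    (2 : ℝ) ^ ((a : ℤ) * (-((m : ℤ) * (m : ℤ)) + (h : ℤ))) * (KM.Acount 2 B B a : ℝ) with hf
  set g : ℕ → ℝ := fun a => (2 : ℝ) ^ (-(1 : ℤ)) *
    (2 : ℝ) ^ ((a : ℤ) * (-((m : ℤ) * (m : ℤ)) + (h : ℤ))) *
      (KM.Acount 2 (((2 : ℤ_[2]) ^ r * d) • B) (((2 : ℤ_[2]) ^ r * d) • B) a : ℝ) with hg
  set a₀ := B.det.valuation + 2 with ha₀
  have h2 : (2 : ℝ) ≠ 0 := two_ne_zero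
  have hstep : ∀ a, a₀ ≤ a → f (a + 1) = f a := by
    intro a ha
    have hc : (2 : ℝ) ^ h * (KM.Acount 2 B B (a + 1) : ℝ) =
        2 ^ (m * m) * (KM.Acount 2 B B a : ℝ) := by
      exact_mod_cast KM.Acount_succ hBs hBd ha
    have he : (2 : ℝ) ^ (((a + 1 : ℕ) : ℤ) * (-((m : ℤ) * (m : ℤ)) + (h : ℤ))) =
        (2 : ℝ) ^ ((a : ℤ) * (-((m : ℤ) * (m : ℤ)) + (h : ℤ))) * ((2 ^ (m * m))⁻¹ * 2 ^ h) := by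
      rw [← zpow_natCast (2 : ℝ) (m * m), ← zpow_natCast (2 : ℝ) h, ← _root_.zpow_neg, ← zpow_add₀ h2,
        ← zpow_add₀ h2]
      congr 1
      push_cast
      ring
    simp only [hf]
    rw [he]
    have h3 : (2 : ℝ) ^ (m * m) ≠ 0 := pow_ne_zero _ h2
    calc _ = (2 : ℝ) ^ (-(1 : ℤ)) * (2 : ℝ) ^ ((a : ℤ) * (-((m : ℤ) * (m : ℤ)) + (h : ℤ))) *
          (2 ^ (m * m))⁻¹ * ((2 : ℝ) ^ h * (KM.Acount 2 B B (a + 1) : ℝ)) := by ring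
      _ = _ := by rw [hc]; field_simp
  have hconst : ∀ a, a₀ ≤ a → f a = f a₀ := by
    intro a ha
    induction a, ha using Nat.le_induction with
    | base => rfl
    | succ a ha ih => rw [hstep a ha, ih]
  have hgf : ∀ a, 1 ≤ a → g (a + r) = (2 : ℝ) ^ (r * h) * f a := by
    intro a ha
    simp only [hf, hg]
    rw [KM.Acount_smul hBs ha r d hd]
    have he : (2 : ℝ) ^ (((a + r : ℕ) : ℤ) * (-((m : ℤ) * (m : ℤ)) + (h : ℤ))) *
        2 ^ (r * (m * m)) =
        2 ^ (r * h) * (2 : ℝ) ^ ((a : ℤ) * (-((m : ℤ) * (m : ℤ)) + (h : ℤ))) := by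
      rw [← zpow_natCast (2 : ℝ) (r * (m * m)), ← zpow_natCast (2 : ℝ) (r * h),
        ← zpow_add₀ h2, ← zpow_add₀ h2]
      congr 1
      push_cast
      ring
    push_cast at he ⊢
    linear_combination (2 : ℝ) ^ (-(1 : ℤ)) * (KM.Acount 2 B B a : ℝ) * he
  have hflim : Tendsto f atTop (nhds (f a₀)) :=
    tendsto_const_nhds.congr' (eventually_atTop.2 ⟨a₀, fun a ha => (hconst a ha).symm⟩)
  have hglim : Tendsto g atTop (nhds ((2 : ℝ) ^ (r * h) * f a₀)) := by
    rw [← tendsto_add_atTop_iff_nat r]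
    exact (hflim.const_mul _).congr' (eventually_atTop.2 ⟨1, fun a ha => (hgf a ha).symm⟩)
  rw [hflim.limUnder_eq, hglim.limUnder_eq]
end
end
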